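/- arXiv:1706.04935 — 2 statements merged into one kernel-verified Lean document; each statement's English description precedes it below -/
import Mathlib

section
/- Let D ⊆ [n]² be a diagram with columns D_j = {i : (i,j) ∈ D}. Then the Schubitope S_D equals the Minkowski sum of Schubert matroid polytopes: S_D = Σ_{j=1}^n P(SM_n(D_j)), where P(SM_n(D_j)) ⊆ ℝ^n is the convex hull of the indicator vectors of the bases of SM_n(D_j). -/
open Finset Pointwise

/-- `DomLE R S`: `R` and `S` have the same cardinality and, for each `k`, the `k`-th least
element of `R` does not exceed the `k`-th least element of `S`.  The bases of the Schubert
matroid `SM_n(S)` are exactly the `B` with `DomLE B S`. -/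
def DomLE {α : Type*} [LinearOrder α] (R S : Finset α) : Prop :=
  R.card = S.card ∧
    ∀ (k : ℕ) (hR : k < (R.sort (· ≤ ·)).length) (hS : k < (S.sort (· ≤ ·)).length),
      (R.sort (· ≤ ·)).get ⟨k, hR⟩ ≤ (S.sort (· ≤ ·)).get ⟨k, hS⟩

/-- Indicator vector `ζ^B ∈ {0,1}^n ⊆ ℝ^n` of a subset `B ⊆ [n]`. -/
def indVec {n : ℕ} (B : Finset (Fin n)) : Fin n → ℝ := fun i => if i ∈ B then 1 else 0

/-- Matroid polytope `P(SM_n(S))` of the Schubert matroid `SM_n(S)`: the convex hull in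
`ℝ^n` of the indicator vectors of its bases, i.e. of the `B` with `B ≤ S`. -/
def smPolytope {n : ℕ} (S : Finset (Fin n)) : Set (Fin n → ℝ) :=
  convexHull ℝ {x | ∃ B : Finset (Fin n), DomLE B S ∧ x = indVec B}

/-- Auxiliary greedy matching count for a parenthesis word (`true` = '(', `false` = ')'),
given the current number of unmatched open parentheses. -/
def matchedPairsAux : List Bool → ℕ → ℕ
  | [], _ => 0
  | true :: rest, o => matchedPairsAux rest (o + 1)
  | false :: rest, 0 => matchedPairsAux rest 0
  | false :: rest, o + 1 => matchedPairsAux rest o + 1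

/-- The number of paired `()`'s in a parenthesis word (`true` = '(', `false` = ')'). -/
def matchedPairs (w : List Bool) : ℕ := matchedPairsAux w 0

/-- Column `j` of a diagram `D ⊆ [n]²`: the set `D_j = {i : (i,j) ∈ D}`. -/
def colSet {n : ℕ} (D : Finset (Fin n × Fin n)) (j : Fin n) : Finset (Fin n) :=
  Finset.univ.filter fun i => (i, j) ∈ D

/-- The parenthesis part of `word_{j,I}(D)`: reading rows `i` from top to bottom, record
'(' (= `true`) if `(i,j) ∉ D` and `i ∈ I`, and ')' (= `false`) if `(i,j) ∈ D` and `i ∉ I`.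
(The `⋆`'s, at positions with `(i,j) ∈ D` and `i ∈ I`, play no role in the matching.) -/
def colWord {n : ℕ} (D : Finset (Fin n × Fin n)) (j : Fin n) (I : Finset (Fin n)) :
    List Bool :=
  (List.finRange n).filterMap fun i =>
    if (i, j) ∈ D then (if i ∈ I then none else some false)
    else (if i ∈ I then some true else none)

/-- `θ_D^j(I)`: the number of paired `()`'s plus the number of `⋆`'s in `word_{j,I}(D)`. -/
def thetaCol {n : ℕ} (D : Finset (Fin n × Fin n)) (j : Fin n) (I : Finset (Fin n)) : ℕ :=
  matchedPairs (colWord D j I) + (colSet D j ∩ I).card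

/-- `θ_D(I) = Σ_{j=1}^n θ_D^j(I)`. -/
def theta {n : ℕ} (D : Finset (Fin n × Fin n)) (I : Finset (Fin n)) : ℕ :=
  ∑ j : Fin n, thetaCol D j I

/-- The Schubitope `S_D` of a diagram `D ⊆ [n]²`. -/
def schubitope {n : ℕ} (D : Finset (Fin n × Fin n)) : Set (Fin n → ℝ) :=
  {a | (∀ i, 0 ≤ a i) ∧ (∑ i, a i) = (D.card : ℝ) ∧
    ∀ I : Finset (Fin n), ∑ i ∈ I, a i ≤ (theta D I : ℝ)}

/-!
A linear functional is maximized over the base polytope of a set function `f` by Edmonds' greedy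
vector of an enumeration sorting its coefficients, so the greedy vectors span the base polytope. As
they depend additively on `f` and lie in the base polytope when `f` is submodular, base polytopes of
submodular functions are additive under Minkowski sums. When `f` is a matroid rank function, the
greedy vectors are indicator vectors of bases, so its base polytope is the matroid polytope.

Both `θ_D^j(I)` and the rank of `I` in the Schubert matroid of `D_j` equal the minimum over heights
`t` of `#{i ∈ D_j | t ≤ i} + #{i ∈ I | i < t}`: a parenthesis word split in two has at most as many
pairs as there are `(` in the first part and `)` in the second, with equality for some splitting.
Hence `S_D` is the base polytope of the sum of the rank functions of the columns.
-/

section BasePolytope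

variable {E : Type*}

/-- Submodularity of a set function, the combinatorial counterpart of concavity. -/
def IsSubmodular {M : Type*} [Add M] [LE M] [DecidableEq E] (f : Finset E → M) : Prop :=
  ∀ s t, f (s ∪ t) + f (s ∩ t) ≤ f s + f t

theorem IsSubmodular.insert_add_le {M : Type*} [Add M] [LE M] [DecidableEq E]
    {f : Finset E → M} (hf : IsSubmodular f) {s t : Finset E} (hst : s ⊆ t) {x : E} (hx : x ∉ t) :
    f (insert x t) + f s ≤ f (insert x s) + f t := by
  have h := hf (insert x s) t
  rwa [insert_union, union_eq_right.mpr hst, insert_inter_of_notMem hx,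
    inter_eq_left.mpr hst] at h

variable [Fintype E]

/-- The base polytope of a set function `f`: the vectors of total mass `f univ` whose mass on every
set `I` is at most `f I`. -/
def basePolytope (f : Finset E → ℝ) : Set (E → ℝ) :=
  {a | ∑ i, a i = f univ ∧ ∀ I, ∑ i ∈ I, a i ≤ f I}

/-- Edmonds' greedy vector of the set function `f` along the enumeration `σ` of the ground set: its
coordinates are the increments of `f` along the chain of initial segments of `σ`. For submodular
`f` with `f ∅ = 0` these vectors are the vertices of `basePolytope f`. -/
def greedyVec (f : Finset E → ℝ) (σ : E ≃ Fin (Fintype.card E)) (i : E) : ℝ :=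
  f {j | σ j ≤ σ i} - f {j | σ j < σ i}

variable {f : Finset E → ℝ}

theorem convex_basePolytope (f : Finset E → ℝ) : Convex ℝ (basePolytope f) := by
  rintro x ⟨hx, hxI⟩ y ⟨hy, hyI⟩ p q hp hq hpq
  have sum_comb (I : Finset E) :
      ∑ i ∈ I, (p • x + q • y) i = p * ∑ i ∈ I, x i + q * ∑ i ∈ I, y i := by
    simp [sum_add_distrib, mul_sum]
  refine ⟨?_, fun I => ?_⟩
  · rw [sum_comb, hx, hy, ← add_mul, hpq, one_mul]
  · calc ∑ i ∈ I, (p • x + q • y) i = p * ∑ i ∈ I, x i + q * ∑ i ∈ I, y i := sum_comb I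
      _ ≤ p * f I + q * f I := by gcongr <;> apply_rules
      _ = f I := by rw [← add_mul, hpq, one_mul]

theorem nonneg_of_mem_basePolytope (hf : Monotone f) {a : E → ℝ} (ha : a ∈ basePolytope f)
    (i : E) : 0 ≤ a i := by
  classical
  have htotal : a i + ∑ j ∈ univ.erase i, a j = f univ :=
    (add_sum_erase _ _ (mem_univ i)).trans ha.1
  linarith [ha.2 (univ.erase i), hf (erase_subset i univ)]

theorem sum_mem_basePolytope {ι : Type*} {s : Finset ι} {f : ι → Finset E → ℝ} {a : ι → E → ℝ}
    (ha : ∀ j ∈ s, a j ∈ basePolytope (f j)) :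
    ∑ j ∈ s, a j ∈ basePolytope (∑ j ∈ s, f j) := by
  refine ⟨?_, fun I => ?_⟩ <;> simp only [Finset.sum_apply] <;> rw [sum_comm]
  · exact sum_congr rfl fun j hj => (ha j hj).1
  · exact sum_le_sum fun j hj => (ha j hj).2 I

theorem greedyVec_sum {ι : Type*} (s : Finset ι) (f : ι → Finset E → ℝ)
    (σ : E ≃ Fin (Fintype.card E)) :
    greedyVec (∑ j ∈ s, f j) σ = ∑ j ∈ s, greedyVec (f j) σ := by
  ext i
  simp [greedyVec]

theorem insert_filter_lt_eq_filter_le [DecidableEq E] (σ : E ≃ Fin (Fintype.card E)) (i : E) :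
    insert i ({j | σ j < σ i} : Finset E) = ({j | σ j ≤ σ i} : Finset E) := by
  ext j
  simp [le_iff_eq_or_lt]

theorem sum_greedyVec_le [DecidableEq E] (hf : IsSubmodular f) (hf₀ : f ∅ = 0)
    (σ : E ≃ Fin (Fintype.card E)) (s : Finset E) : ∑ i ∈ s, greedyVec f σ i ≤ f s := by
  induction s using induction_on_max_value σ with
  | empty => simp [hf₀]
  | insert x s hx hmax ih =>
    have hsub : s ⊆ ({j | σ j < σ x} : Finset E) := fun j hj => by
      simpa using (hmax j hj).lt_of_ne (σ.injective.ne (ne_of_mem_of_not_mem hj hx))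
    have hdim := hf.insert_add_le hsub (x := x) (by simp)
    rw [insert_filter_lt_eq_filter_le] at hdim
    rw [sum_insert hx, greedyVec]
    linarith

theorem sum_greedyVec_eq (hf₀ : f ∅ = 0) (σ : E ≃ Fin (Fintype.card E)) {s : Finset E}
    (hs : ∀ i ∈ s, ∀ j, σ j ≤ σ i → j ∈ s) : ∑ i ∈ s, greedyVec f σ i = f s := by
  classical
  induction s using induction_on_max_value σ with
  | empty => simp [hf₀]
  | insert x s hx hmax ih =>
    have hle : insert x s = ({j | σ j ≤ σ x} : Finset E) := by
      ext j
      rw [mem_filter_univ]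
      refine ⟨fun hj => ?_, hs x (mem_insert_self x s) j⟩
      rcases mem_insert.mp hj with rfl | hj
      exacts [le_rfl, hmax j hj]
    have hlt : s = ({j | σ j < σ x} : Finset E) := by
      rw [← erase_insert hx, hle, ← insert_filter_lt_eq_filter_le, erase_insert (by simp)]
    have ih' : ∑ i ∈ s, greedyVec f σ i = f s := by
      refine ih fun i hi j hji => ?_
      rw [hlt, mem_filter_univ] at hi ⊢
      exact hji.trans_lt hi
    rw [sum_insert hx, ih', greedyVec, ← hle, ← hlt, sub_add_cancel]

theorem greedyVec_mem_basePolytope [DecidableEq E] (hf : IsSubmodular f) (hf₀ : f ∅ = 0)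
    (σ : E ≃ Fin (Fintype.card E)) : greedyVec f σ ∈ basePolytope f :=
  ⟨sum_greedyVec_eq hf₀ σ (by simp), sum_greedyVec_le hf hf₀ σ⟩

theorem exists_equiv_fin_antitone {β : Type*} [LinearOrder β] (w : E → β) :
    ∃ σ : E ≃ Fin (Fintype.card E), ∀ i j, σ i ≤ σ j → w j ≤ w i := by
  let e := Fintype.equivFin E
  refine ⟨e.trans (Tuple.sort (OrderDual.toDual ∘ w ∘ e.symm)).symm, fun i j hij => ?_⟩
  simpa using Tuple.monotone_sort (OrderDual.toDual ∘ w ∘ e.symm) hij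

/- Abel summation along the decreasing values of `w`: the element `x` of least weight enters the
sum with the factor `w x - c`, which multiplies the sum of `d` over the whole superlevel set. -/
theorem sum_sub_mul_nonpos {R ι : Type*} [CommRing R] [LinearOrder R] [IsStrictOrderedRing R]
    {s : Finset ι} {w d : ι → R} {c : R} (hc : ∀ i ∈ s, c ≤ w i)
    (hd : ∀ t, c < t → ∑ i ∈ s with t ≤ w i, d i ≤ 0) :
    ∑ i ∈ s, (w i - c) * d i ≤ 0 := by
  classical
  induction s using induction_on_min_value w generalizing c with
  | empty => simp
  | insert x s _ hmin ih =>
    have hcx : c ≤ w x := hc x (mem_insert_self x s)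
    have hs : ∑ i ∈ s, (w i - w x) * d i ≤ 0 := ih hmin fun t ht => by
      simpa [filter_insert, ht.not_ge] using hd t (hcx.trans_lt ht)
    have hw : (w x - c) * ∑ i ∈ insert x s, d i ≤ 0 := by
      rcases hcx.eq_or_lt with rfl | hlt
      · simp
      · refine mul_nonpos_of_nonneg_of_nonpos (sub_nonneg.mpr hcx) ?_
        rw [← filter_true_of_mem (s := insert x s) (p := fun i => w x ≤ w i) (by simpa using hmin)]
        exact hd (w x) hlt
    calc ∑ i ∈ insert x s, (w i - c) * d i
        = ∑ i ∈ insert x s, (w i - w x) * d i + (w x - c) * ∑ i ∈ insert x s, d i := by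
          rw [mul_sum, ← sum_add_distrib]
          exact sum_congr rfl fun i _ => by ring
      _ = ∑ i ∈ s, (w i - w x) * d i + (w x - c) * ∑ i ∈ insert x s, d i := by
          rw [sum_insert_of_eq_zero_if_notMem]
          simp
      _ ≤ 0 := by linarith

theorem exists_sum_mul_le_sum_mul_greedyVec (hf₀ : f ∅ = 0) {a : E → ℝ} (ha : a ∈ basePolytope f)
    (w : E → ℝ) : ∃ σ, ∑ i, w i * a i ≤ ∑ i, w i * greedyVec f σ i := by
  obtain ⟨σ, hσ⟩ := exists_equiv_fin_antitone w
  obtain ⟨c, hc⟩ := (Set.finite_range w).bddBelow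
  have hlevel (t : ℝ) : ∑ i with t ≤ w i, (a i - greedyVec f σ i) ≤ 0 := by
    rw [sum_sub_distrib, sum_greedyVec_eq hf₀ σ, sub_nonpos]
    · exact ha.2 _
    · simpa using fun i hi j hji => hi.trans (hσ j i hji)
  have htotal : ∑ i, (a i - greedyVec f σ i) = 0 := by
    rw [sum_sub_distrib, ha.1, sum_greedyVec_eq hf₀ σ (by simp), sub_self]
  have habel : ∑ i, (w i - c) * (a i - greedyVec f σ i) ≤ 0 :=
    sum_sub_mul_nonpos (fun i _ => hc ⟨i, rfl⟩) fun t _ => hlevel t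
  refine ⟨σ, sub_nonpos.mp ?_⟩
  calc ∑ i, w i * a i - ∑ i, w i * greedyVec f σ i
      = ∑ i, (w i - c) * (a i - greedyVec f σ i) + c * ∑ i, (a i - greedyVec f σ i) := by
        rw [mul_sum, ← sum_add_distrib, ← sum_sub_distrib]
        exact sum_congr rfl fun i _ => by ring
    _ ≤ 0 := by simpa [htotal] using habel

theorem mem_of_forall_exists_sum_mul_le {K : Set (E → ℝ)} (hK : Convex ℝ K)
    (hKc : IsClosed K) {a : E → ℝ} (h : ∀ w : E → ℝ, ∃ v ∈ K, ∑ i, w i * a i ≤ ∑ i, w i * v i) :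
    a ∈ K := by
  classical
  by_contra ha
  obtain ⟨φ, u, hφK, hφa⟩ := geometric_hahn_banach_closed_point hK hKc ha
  have hφ (x : E → ℝ) : φ x = ∑ i, φ (Pi.single i 1) * x i := by
    conv_lhs => rw [← univ_sum_single x, map_sum]
    refine sum_congr rfl fun i _ => ?_
    rw [← mul_one (x i), ← smul_eq_mul, Pi.single_smul, map_smul, smul_eq_mul, mul_comm]
    simp
  obtain ⟨v, hv, hle⟩ := h fun i => φ (Pi.single i 1)
  rw [← hφ, ← hφ] at hle
  linarith [hφK v hv]

theorem basePolytope_subset_convexHull_greedyVec (hf₀ : f ∅ = 0) :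
    basePolytope f ⊆ convexHull ℝ (Set.range (greedyVec f)) := fun a ha => by
  refine mem_of_forall_exists_sum_mul_le (convex_convexHull ℝ _)
    ((Set.finite_range _).isClosed_convexHull (𝕜 := ℝ)) fun w => ?_
  obtain ⟨σ, hσ⟩ := exists_sum_mul_le_sum_mul_greedyVec hf₀ ha w
  exact ⟨_, subset_convexHull ℝ _ ⟨σ, rfl⟩, hσ⟩

theorem basePolytope_sum [DecidableEq E] {ι : Type*} (s : Finset ι) {f : ι → Finset E → ℝ}
    (hf : ∀ j ∈ s, IsSubmodular (f j)) (hf₀ : ∀ j ∈ s, f j ∅ = 0) :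
    basePolytope (∑ j ∈ s, f j) = ∑ j ∈ s, basePolytope (f j) := by
  apply Set.Subset.antisymm
  · have hsum₀ : (∑ j ∈ s, f j) ∅ = 0 := by rw [Finset.sum_apply, sum_eq_zero hf₀]
    refine (basePolytope_subset_convexHull_greedyVec hsum₀).trans (convexHull_min ?_ ?_)
    · rintro _ ⟨σ, rfl⟩
      rw [greedyVec_sum]
      exact Set.finsetSum_mem_finsetSum _ _ _ fun j hj =>
        greedyVec_mem_basePolytope (hf j hj) (hf₀ j hj) σ
    · exact convex_sum _ fun j _ => convex_basePolytope (f j)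
  · intro a ha
    obtain ⟨g, hg, rfl⟩ := (Set.mem_finsetSum s _ a).mp ha
    exact sum_mem_basePolytope fun j hj => hg hj

end BasePolytope

section IndicatorVectors

variable {n : ℕ}

theorem sum_indVec (I B : Finset (Fin n)) : ∑ i ∈ I, indVec B i = (#(I ∩ B) : ℝ) := by
  simp [indVec, sum_ite_mem]

theorem indVec_mem_basePolytope_iff {r : Finset (Fin n) → ℕ} {B : Finset (Fin n)} :
    indVec B ∈ basePolytope (fun I => (r I : ℝ)) ↔ #B = r univ ∧ ∀ I, #(I ∩ B) ≤ r I := by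
  simp [basePolytope, sum_indVec]

theorem greedyVec_mem_range_indVec {r : Finset (Fin n) → ℕ} (hmono : Monotone r)
    (hunit : ∀ x I, r (insert x I) ≤ r I + 1) (σ : Fin n ≃ Fin (Fintype.card (Fin n))) :
    greedyVec (fun I => (r I : ℝ)) σ ∈ Set.range indVec := by
  refine ⟨({i | r {j | σ j < σ i} < r {j | σ j ≤ σ i}} : Finset (Fin n)), funext fun i => ?_⟩
  have hunit_i := hunit i ({j | σ j < σ i} : Finset (Fin n))
  have hmono_i := hmono (subset_insert i ({j | σ j < σ i} : Finset (Fin n)))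
  rw [insert_filter_lt_eq_filter_le] at hunit_i hmono_i
  simp only [indVec, greedyVec, mem_filter_univ]
  split_ifs with hlt
  · rw [hunit_i.antisymm hlt]
    simp
  · rw [hmono_i.antisymm (not_lt.mp hlt), sub_self]

theorem basePolytope_eq_convexHull_indVec {r : Finset (Fin n) → ℕ}
    (hsub : IsSubmodular fun I => (r I : ℝ)) (hempty : r ∅ = 0) (hmono : Monotone r)
    (hunit : ∀ x I, r (insert x I) ≤ r I + 1) :
    basePolytope (fun I => (r I : ℝ)) =
      convexHull ℝ (basePolytope (fun I => (r I : ℝ)) ∩ Set.range indVec) := by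
  have hr₀ : (r ∅ : ℝ) = 0 := by exact_mod_cast hempty
  apply Set.Subset.antisymm
  · refine (basePolytope_subset_convexHull_greedyVec hr₀).trans (convexHull_mono ?_)
    rintro _ ⟨σ, rfl⟩
    exact ⟨greedyVec_mem_basePolytope hsub hr₀ σ, greedyVec_mem_range_indVec hmono hunit σ⟩
  · exact convexHull_min Set.inter_subset_left (convex_basePolytope _)

end IndicatorVectors

section DominanceOrder

variable {α : Type*} [LinearOrder α] {R S : Finset α}

theorem domLE_iff_orderEmbOfFin_le (h : #R = #S) :
    DomLE R S ↔ ∀ k, R.orderEmbOfFin h k ≤ S.orderEmbOfFin rfl k := by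
  refine ⟨fun hdom k => hdom.2 k (by simp [h]) (by simp), fun hle => ⟨h, fun k _ hS => ?_⟩⟩
  exact hle ⟨k, by simpa using hS⟩

theorem card_filter_orderEmbOfFin {m : ℕ} (h : #S = m) (p : α → Prop) [DecidablePred p] :
    #{k | p (S.orderEmbOfFin h k)} = #{i ∈ S | p i} := by
  conv_rhs => rw [← map_orderEmbOfFin_univ S h, filter_map, card_map]
  rfl

theorem DomLE.card_filter_le (h : DomLE R S) {p : α → Prop} [DecidablePred p] (hp : Antitone p) :
    #{i ∈ S | p i} ≤ #{i ∈ R | p i} := by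
  rw [← card_filter_orderEmbOfFin h.1, ← card_filter_orderEmbOfFin rfl]
  exact card_le_card <| monotone_filter_right _ fun k _ =>
    hp ((domLE_iff_orderEmbOfFin_le h.1).mp h k)

theorem domLE_of_card_filter_lt_le (h : #R = #S)
    (hlt : ∀ t, #{i ∈ S | i < t} ≤ #{i ∈ R | i < t}) : DomLE R S := by
  rw [domLE_iff_orderEmbOfFin_le h]
  intro k
  by_contra! hk
  have hcard := hlt (R.orderEmbOfFin h k)
  rw [← card_filter_orderEmbOfFin h, ← card_filter_orderEmbOfFin rfl] at hcard
  have hR : #{k' | R.orderEmbOfFin h k' < R.orderEmbOfFin h k} = (k : ℕ) := by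
    simp [filter_gt_eq_Iio]
  have hS : Iic k ⊆ ({k' | S.orderEmbOfFin rfl k' < R.orderEmbOfFin h k} : Finset (Fin #S)) :=
    fun k' hk' => by
      simpa using ((S.orderEmbOfFin rfl).monotone (mem_Iic.mp hk')).trans_lt hk
  have hSk := card_le_card hS
  rw [Fin.card_Iic] at hSk
  lia

end DominanceOrder

section SchubertRank

variable {n : ℕ}

/-- The cut at height `t` bounding the size of `B ∩ I` for a basis `B` of the Schubert matroid of
`S`: `B` has at most `#{i ∈ S | t ≤ i}` elements in rows `≥ t`, and `I` bounds it in rows `< t`. -/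
def schubertCut (S I : Finset (Fin n)) (t : ℕ) : ℕ :=
  #{i ∈ S | t ≤ i.val} + #{i ∈ I | i.val < t}

/-- The rank function of the Schubert matroid of `S`, encoded by its min-cut formula. -/
noncomputable def schubertRank (S I : Finset (Fin n)) : ℕ :=
  ⨅ t, schubertCut S I t

theorem card_filter_lt_add_card_filter_le (S : Finset (Fin n)) (t : ℕ) :
    #{i ∈ S | i.val < t} + #{i ∈ S | t ≤ i.val} = #S := by
  simpa using card_filter_add_card_filter_not (s := S) (fun i => i.val < t)

theorem schubertRank_le_schubertCut (S I : Finset (Fin n)) (t : ℕ) :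
    schubertRank S I ≤ schubertCut S I t :=
  ciInf_le' _ t

theorem exists_schubertRank_eq_schubertCut (S I : Finset (Fin n)) :
    ∃ t, schubertRank S I = schubertCut S I t :=
  (Nat.sInf_mem (Set.range_nonempty (schubertCut S I))).imp fun _ => Eq.symm

theorem schubertRank_empty (S : Finset (Fin n)) : schubertRank S ∅ = 0 := by
  have hcut : schubertCut S ∅ n = 0 := by simp [schubertCut, filter_eq_empty_iff]
  exact Nat.eq_zero_of_le_zero (hcut ▸ schubertRank_le_schubertCut S ∅ n)

theorem schubertRank_univ (S : Finset (Fin n)) : schubertRank S univ = #S := by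
  apply le_antisymm
  · simpa [schubertCut] using schubertRank_le_schubertCut S univ 0
  · obtain ⟨t, ht⟩ := exists_schubertRank_eq_schubertCut S univ
    have hlt : #{i ∈ S | i.val < t} ≤ #{i : Fin n | i.val < t} :=
      card_le_card (filter_subset_filter _ (subset_univ S))
    rw [ht, schubertCut, ← card_filter_lt_add_card_filter_le S t]
    lia

theorem schubertRank_mono (S : Finset (Fin n)) : Monotone (schubertRank S) := fun I J hIJ => by
  obtain ⟨t, ht⟩ := exists_schubertRank_eq_schubertCut S J
  calc schubertRank S I ≤ schubertCut S I t := schubertRank_le_schubertCut S I t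
    _ ≤ schubertCut S J t := by unfold schubertCut; gcongr
    _ = schubertRank S J := ht.symm

theorem schubertRank_insert_le (S : Finset (Fin n)) (x : Fin n) (I : Finset (Fin n)) :
    schubertRank S (insert x I) ≤ schubertRank S I + 1 := by
  obtain ⟨t, ht⟩ := exists_schubertRank_eq_schubertCut S I
  calc schubertRank S (insert x I) ≤ schubertCut S (insert x I) t :=
        schubertRank_le_schubertCut S _ t
    _ ≤ schubertCut S I t + 1 := by
        rw [schubertCut, schubertCut, filter_insert]
        split_ifs
        · linarith [card_insert_le x {i ∈ I | i.val < t}]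
        · lia
    _ = schubertRank S I + 1 := by rw [ht]

theorem schubertCut_union_add_schubertCut_inter_le (S I J : Finset (Fin n)) {t u : ℕ}
    (htu : t ≤ u) :
    schubertCut S (I ∪ J) t + schubertCut S (I ∩ J) u ≤ schubertCut S I t + schubertCut S J u := by
  have hunion : {i ∈ I ∪ J | i.val < t} ∪ {i ∈ I ∩ J | i.val < u} ⊆
      {i ∈ I | i.val < t} ∪ {i ∈ J | i.val < u} := by
    grind
  have hinter : {i ∈ I ∪ J | i.val < t} ∩ {i ∈ I ∩ J | i.val < u} ⊆
      {i ∈ I | i.val < t} ∩ {i ∈ J | i.val < u} := by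
    grind
  have hcard := add_le_add (card_le_card hunion) (card_le_card hinter)
  rw [card_union_add_card_inter, card_union_add_card_inter] at hcard
  unfold schubertCut
  lia

theorem isSubmodular_schubertRank (S : Finset (Fin n)) : IsSubmodular (schubertRank S) := by
  intro I J
  obtain ⟨t, ht⟩ := exists_schubertRank_eq_schubertCut S I
  obtain ⟨u, hu⟩ := exists_schubertRank_eq_schubertCut S J
  wlog htu : t ≤ u generalizing I J t u
  · rw [union_comm, inter_comm, add_comm (schubertRank S I)]
    exact this J I u hu t ht (le_of_not_ge htu)
  rw [ht, hu]
  exact (add_le_add (schubertRank_le_schubertCut S _ t) (schubertRank_le_schubertCut S _ u)).trans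
    (schubertCut_union_add_schubertCut_inter_le S I J htu)

theorem DomLE.card_inter_le_schubertRank {B S : Finset (Fin n)} (h : DomLE B S)
    (I : Finset (Fin n)) : #(I ∩ B) ≤ schubertRank S I := by
  obtain ⟨t, ht⟩ := exists_schubertRank_eq_schubertCut S I
  have hlow : #{i ∈ I ∩ B | i.val < t} ≤ #{i ∈ I | i.val < t} := by
    gcongr
    exact inter_subset_left
  have hhigh : #{i ∈ I ∩ B | t ≤ i.val} ≤ #{i ∈ B | t ≤ i.val} := by
    gcongr
    exact inter_subset_right
  have hdom : #{i ∈ S | i.val < t} ≤ #{i ∈ B | i.val < t} :=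
    h.card_filter_le fun i j hij (hj : j.val < t) => lt_of_le_of_lt hij hj
  rw [ht, schubertCut]
  linarith [h.1, card_filter_lt_add_card_filter_le S t, card_filter_lt_add_card_filter_le B t,
    card_filter_lt_add_card_filter_le (I ∩ B) t]

theorem domLE_iff_card_inter_le_schubertRank {B S : Finset (Fin n)} :
    DomLE B S ↔ #B = #S ∧ ∀ I, #(I ∩ B) ≤ schubertRank S I := by
  refine ⟨fun h => ⟨h.1, h.card_inter_le_schubertRank⟩, fun ⟨hcard, hrank⟩ =>
    domLE_of_card_filter_lt_le hcard fun t => ?_⟩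
  have hcut : #{i ∈ B | t.val ≤ i.val} ≤ #{i ∈ S | t.val ≤ i.val} := by
    have hS : schubertCut S {i | t ≤ i} t = #{i ∈ S | t.val ≤ i.val} := by
      simp [schubertCut, filter_filter, filter_eq_empty_iff]
    have hB : ({i | t ≤ i} : Finset (Fin n)) ∩ B = {i ∈ B | t.val ≤ i.val} := by
      ext i
      simp [and_comm]
    exact hB ▸ hS ▸ (hrank _).trans (schubertRank_le_schubertCut S {i | t ≤ i} t)
  have hB := card_filter_lt_add_card_filter_le B t
  have hS := card_filter_lt_add_card_filter_le S t
  simp only [Fin.lt_def]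
  lia

theorem isSubmodular_cast_schubertRank (S : Finset (Fin n)) :
    IsSubmodular fun I => (schubertRank S I : ℝ) := fun I J => by
  dsimp only
  exact_mod_cast isSubmodular_schubertRank S I J

theorem smPolytope_eq_basePolytope (S : Finset (Fin n)) :
    smPolytope S = basePolytope fun I => (schubertRank S I : ℝ) := by
  rw [basePolytope_eq_convexHull_indVec (isSubmodular_cast_schubertRank S) (schubertRank_empty S)
    (schubertRank_mono S) (schubertRank_insert_le S), smPolytope]
  congr 1
  ext x
  constructor
  · rintro ⟨B, hB, rfl⟩
    refine ⟨indVec_mem_basePolytope_iff.mpr ?_, B, rfl⟩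
    rwa [schubertRank_univ, ← domLE_iff_card_inter_le_schubertRank]
  · rintro ⟨hx, B, rfl⟩
    refine ⟨B, ?_, rfl⟩
    rwa [domLE_iff_card_inter_le_schubertRank, ← schubertRank_univ S,
      ← indVec_mem_basePolytope_iff]

end SchubertRank

section ParenthesisMatching

theorem matchedPairsAux_le_count_false (w : List Bool) (o : ℕ) :
    matchedPairsAux w o ≤ w.count false := by
  fun_induction matchedPairsAux w o <;> grind

theorem matchedPairsAux_append_le (u v : List Bool) (o : ℕ) :
    matchedPairsAux (u ++ v) o ≤ o + u.count true + v.count false := by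
  induction u generalizing o with
  | nil => simpa using (matchedPairsAux_le_count_false v o).trans (Nat.le_add_left _ o)
  | cons b u ih => rcases b <;> rcases o with _ | o <;> grind [matchedPairsAux]

/- The word is split after its last unmatched `)`: every `(` before that point is paired, and so is
every `)` after it. -/
theorem matchedPairsAux_eq_count_false_or_exists_append (w : List Bool) (o : ℕ) :
    matchedPairsAux w o = w.count false ∨
      ∃ u v, w = u ++ v ∧ matchedPairsAux w o = o + u.count true + v.count false := by
  fun_induction matchedPairsAux w o with
  | case1 => simp
  | case2 w o ih =>
    rcases ih with h | ⟨u, v, rfl, h⟩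
    · exact .inl (by simpa using h)
    · exact .inr ⟨true :: u, v, rfl, by rw [h, List.count_cons_self]; lia⟩
  | case3 w ih =>
    rcases ih with h | ⟨u, v, rfl, h⟩
    · exact .inr ⟨[false], w, rfl, by simpa using h⟩
    · exact .inr ⟨false :: u, v, rfl, by simpa using h⟩
  | case4 w o ih =>
    rcases ih with h | ⟨u, v, rfl, h⟩
    · exact .inl (by simpa using h)
    · exact .inr ⟨false :: u, v, rfl, by rw [h, List.count_cons_of_ne (by simp)]; lia⟩

theorem matchedPairs_append_le (u v : List Bool) :
    matchedPairs (u ++ v) ≤ u.count true + v.count false := by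
  simpa [matchedPairs] using matchedPairsAux_append_le u v 0

theorem exists_append_matchedPairs_eq (w : List Bool) :
    ∃ u v, w = u ++ v ∧ matchedPairs w = u.count true + v.count false := by
  rcases matchedPairsAux_eq_count_false_or_exists_append w 0 with h | ⟨u, v, hw, h⟩
  · exact ⟨[], w, rfl, by simpa [matchedPairs] using h⟩
  · exact ⟨u, v, hw, by simpa [matchedPairs] using h⟩

end ParenthesisMatching

section Diagram

variable {n : ℕ}

theorem countP_mem_eq_card_filter_mem {α : Type*} [DecidableEq α] {l : List α} (hl : l.Nodup)
    (s : Finset α) : l.countP (· ∈ s) = #{i ∈ s | i ∈ l} := by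
  rw [List.countP_eq_length_filter, ← List.toFinset_card_of_nodup (hl.filter _)]
  congr 1
  ext i
  simp [and_comm]

theorem card_filter_sdiff_add_card_filter_inter {α : Type*} [DecidableEq α] (s t : Finset α)
    (p : α → Prop) [DecidablePred p] :
    #{i ∈ s \ t | p i} + #{i ∈ s ∩ t | p i} = #{i ∈ s | p i} := by
  rw [← card_union_of_disjoint (disjoint_filter_filter (disjoint_sdiff_inter s t)),
    ← filter_union, sdiff_union_inter]

theorem mem_take_finRange {k : ℕ} {i : Fin n} : i ∈ (List.finRange n).take k ↔ i.val < k := by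
  rw [List.mem_take_iff_getElem]
  refine ⟨?_, fun h => ⟨i, by simpa using h, by simp⟩⟩
  rintro ⟨m, hm, rfl⟩
  simpa using (lt_min_iff.mp hm).1

theorem mem_drop_finRange {k : ℕ} {i : Fin n} : i ∈ (List.finRange n).drop k ↔ k ≤ i.val := by
  rw [List.mem_drop_iff_getElem]
  refine ⟨?_, fun h => ⟨i - k, ?_, ?_⟩⟩
  · rintro ⟨m, hm, rfl⟩
    simp
  · rw [List.length_finRange]
    lia
  · simp [Nat.add_sub_cancel' h]

variable (D : Finset (Fin n × Fin n)) (j : Fin n) (I : Finset (Fin n))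

/-- The letter that row `i` contributes to `colWord D j I`, if any. -/
def colLetter (i : Fin n) : Option Bool :=
  if (i, j) ∈ D then (if i ∈ I then none else some false)
  else (if i ∈ I then some true else none)

theorem count_true_filterMap_colLetter (l : List (Fin n)) :
    (l.filterMap (colLetter D j I)).count true = l.countP fun i => i ∈ I \ colSet D j := by
  rw [List.count, List.countP_filterMap]
  congr! 2 with i
  by_cases hD : (i, j) ∈ D <;> by_cases hI : i ∈ I <;> simp [colLetter, colSet, hD, hI]

theorem count_false_filterMap_colLetter (l : List (Fin n)) :
    (l.filterMap (colLetter D j I)).count false = l.countP fun i => i ∈ colSet D j \ I := by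
  rw [List.count, List.countP_filterMap]
  congr! 2 with i
  by_cases hD : (i, j) ∈ D <;> by_cases hI : i ∈ I <;> simp [colLetter, colSet, hD, hI]

theorem schubertCut_colSet (k : ℕ) :
    schubertCut (colSet D j) I k =
      (((List.finRange n).take k).filterMap (colLetter D j I)).count true +
        (((List.finRange n).drop k).filterMap (colLetter D j I)).count false +
        #(colSet D j ∩ I) := by
  rw [count_true_filterMap_colLetter, count_false_filterMap_colLetter,
    countP_mem_eq_card_filter_mem ((List.nodup_finRange n).sublist (List.take_sublist k _)),
    countP_mem_eq_card_filter_mem ((List.nodup_finRange n).sublist (List.drop_sublist k _)),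
    schubertCut, ← card_filter_sdiff_add_card_filter_inter I (colSet D j),
    ← card_filter_sdiff_add_card_filter_inter (colSet D j) I, inter_comm I,
    ← card_filter_lt_add_card_filter_le (colSet D j ∩ I) k]
  simp only [mem_take_finRange, mem_drop_finRange]
  lia

theorem thetaCol_eq_schubertRank : thetaCol D j I = schubertRank (colSet D j) I := by
  apply le_antisymm
  · obtain ⟨k, hk⟩ := exists_schubertRank_eq_schubertCut (colSet D j) I
    have hword : colWord D j I = ((List.finRange n).take k).filterMap (colLetter D j I) ++
        ((List.finRange n).drop k).filterMap (colLetter D j I) := by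
      rw [← List.filterMap_append, List.take_append_drop]
      rfl
    rw [hk, schubertCut_colSet, thetaCol, hword]
    gcongr
    exact matchedPairs_append_le _ _
  · obtain ⟨u, v, huv, hmatch⟩ := exists_append_matchedPairs_eq (colWord D j I)
    obtain ⟨l, l', hl, rfl, rfl⟩ := List.filterMap_eq_append_iff.mp huv
    have hcut := schubertCut_colSet D j I l.length
    rw [hl, List.take_left, List.drop_left] at hcut
    rw [thetaCol, hmatch]
    exact hcut ▸ schubertRank_le_schubertCut _ _ _

theorem card_eq_sum_card_colSet : #D = ∑ j, #(colSet D j) := by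
  rw [card_eq_sum_card_fiberwise (f := Prod.snd) (t := univ) (by simp)]
  refine sum_congr rfl fun j _ => (card_nbij (·, j) ?_ ?_ ?_).symm
  · simp [Set.MapsTo, colSet]
  · exact fun _ _ _ _ h => (Prod.mk.inj h).1
  · rintro ⟨i, j'⟩ h
    obtain ⟨hD, rfl⟩ := mem_filter.mp h
    exact ⟨i, by simpa [colSet] using hD, rfl⟩

theorem schubitope_eq_basePolytope :
    schubitope D =
      basePolytope (∑ j, fun I : Finset (Fin n) => (schubertRank (colSet D j) I : ℝ)) := by
  have htheta (I : Finset (Fin n)) :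
      (∑ j, fun I : Finset (Fin n) => (schubertRank (colSet D j) I : ℝ)) I = theta D I := by
    simp [theta, thetaCol_eq_schubertRank]
  have hcard : (theta D univ : ℝ) = #D := by
    simp [theta, thetaCol_eq_schubertRank, schubertRank_univ, card_eq_sum_card_colSet D]
  have hmono : Monotone (∑ j, fun I : Finset (Fin n) => (schubertRank (colSet D j) I : ℝ)) :=
    fun I J hIJ => by
      simp only [Finset.sum_apply]
      exact sum_le_sum fun j _ => by exact_mod_cast schubertRank_mono (colSet D j) hIJ
  ext a
  refine ⟨fun ⟨_, hsum, hle⟩ => ⟨?_, fun I => ?_⟩, fun ha =>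
    ⟨nonneg_of_mem_basePolytope hmono ha, ?_, fun I => ?_⟩⟩
  · rw [htheta, hcard, hsum]
  · rw [htheta]; exact hle I
  · rw [ha.1, htheta, hcard]
  · rw [← htheta]; exact ha.2 I

end Diagram

/-- The Schubitope of a diagram `D ⊆ [n]²` equals the Minkowski sum of the Schubert matroid
polytopes of its columns: `S_D = Σ_{j=1}^n P(SM_n(D_j))`. -/
theorem stmt3 (n : ℕ) (D : Finset (Fin n × Fin n)) :
    schubitope D = ∑ j : Fin n, smPolytope (colSet D j) := by
  calc schubitope D
      = basePolytope (∑ j, fun I : Finset (Fin n) => (schubertRank (colSet D j) I : ℝ)) :=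
        schubitope_eq_basePolytope D
    _ = ∑ j, basePolytope fun I : Finset (Fin n) => (schubertRank (colSet D j) I : ℝ) :=
        basePolytope_sum _ (fun j _ => isSubmodular_cast_schubertRank (colSet D j))
          fun j _ => by exact_mod_cast schubertRank_empty (colSet D j)
    _ = ∑ j, smPolytope (colSet D j) := by simp only [smPolytope_eq_basePolytope]
end

section
/- For every permutation w ∈ S_n, the Schubert polynomial 𝔖_w has saturated Newton polytope: every lattice point of the Newton polytope of 𝔖_w is the exponent vector of a monomial appearing with nonzero coefficient in 𝔖_w. -/
open Finset MvPolynomial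

/-- The Newton polytope of a multivariate polynomial: the convex hull of the exponent
vectors of the monomials appearing with nonzero coefficient. -/
def newtonPolytope {σ : Type*} (f : MvPolynomial σ ℤ) : Set (σ → ℝ) :=
  convexHull ℝ ((fun (d : σ →₀ ℕ) (i : σ) => ((d i : ℕ) : ℝ)) '' ↑f.support)

/-!
Let `i` be the first position at which `w` differs from the longest permutation. The cotransition
formula `x_i 𝔖_w = ∑ 𝔖_{w t_ij}`, summed over the covers `w t_ij` of `w` with `j > i`, follows from
the divided difference recursion and has no signs. Hence the coefficients of `𝔖_w` are nonnegative
and no monomial cancels: `x^d` occurs in `𝔖_w` if and only if `x_i x^d` occurs in some `𝔖_{w t_ij}`.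

The sums `∑ v_c` of integer points `v_c`, one in the Schubert matroid polytope of each column `c`
of the Rothe diagram of `w`, obey the same recursion. A summand can be increased by one in row `i`
only if it vanishes there. Choosing the summands and the column with such a hole so that the value
labelling the column is as small as possible yields a cover: otherwise the prefix sums of two
columns agree somewhere, and exchanging the parts above that row produces a smaller hole. So these
sums are exactly the exponent vectors of `𝔖_w`.

A lattice point of the Newton polytope is therefore a sum of real points of the matroid polytopes.
The decompositions of a given lattice point form a polytope, and an extreme point of it is integral:
every row with a fractional entry has at least two of them, and so does every column segment over
which the prefix sum returns to an integer, so the tight constraints, of which one is redundant,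
could not otherwise isolate the point.
-/

namespace Schubert

open Equiv (Perm swap)

section Permutations

theorem mul_swap_apply_of_ne_of_ne {α : Type*} [DecidableEq α] {w : Perm α} {i j r : α}
    (hi : r ≠ i) (hj : r ≠ j) : (w * swap i j) r = w r := by
  rw [Equiv.Perm.mul_apply, Equiv.swap_apply_of_ne_of_ne hi hj]

theorem mul_swap_mul_swap_mul_swap {α : Type*} [DecidableEq α] (w : Perm α) (i j k l : α) :
    w * swap k l * swap i j * swap k l = w * swap (swap k l i) (swap k l j) := by
  rw [Equiv.swap_apply_apply, Equiv.swap_inv]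
  simp only [mul_assoc]

variable {α : Type*} [LinearOrder α] {w : Perm α} {i j k l : α}

theorem toLex_lt_toLex_mul_swap (hij : i < j) (h : w i < w j) :
    toLex (w : α → α) < toLex (w * swap i j : α → α) := by
  refine ⟨i, fun r hr => ?_, by simpa using h⟩
  exact (mul_swap_apply_of_ne_of_ne hr.ne (hr.trans hij).ne).symm

theorem ascent_induction [Finite α] {P : Perm α → Prop}
    (step : ∀ w : Perm α, (∀ i j, i < j → w i < w j → P (w * swap i j)) → P w) (w : Perm α) :
    P w :=
  have : Finite (Lex (α → α)) := inferInstanceAs (Finite (α → α))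
  (InvImage.wf (fun w : Perm α => toLex (w : α → α)) wellFounded_gt).induction w
    fun w ih => step w fun _ _ hij h => ih _ (toLex_lt_toLex_mul_swap hij h)

/-- The positions `j > i` for which `w * swap i j` covers `w` in the Bruhat order. -/
def coverPositions [Fintype α] (w : Perm α) (i : α) : Finset α :=
  {j | i < j ∧ w i < w j ∧ ∀ k, i < k → k < j → ¬ (w i < w k ∧ w k < w j)}

theorem mem_coverPositions [Fintype α] : j ∈ coverPositions w i ↔
    i < j ∧ w i < w j ∧ ∀ k, i < k → k < j → ¬ (w i < w k ∧ w k < w j) := by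
  simp [coverPositions]

/-- `i` is the first position at which `w` differs from the longest permutation: `w` takes its
largest possible values before `i`, but not at `i`. -/
def IsFirstDefect (w : Perm α) (i : α) : Prop :=
  (∀ r < i, ∀ s > r, w s < w r) ∧ ∃ s > i, w i < w s

theorem exists_isFirstDefect [Finite α] (h : ¬ StrictAnti w) : ∃ i, IsFirstDefect w i := by
  have hdefect : ∃ i, ∃ s > i, w i < w s := by
    by_contra! hle
    exact h fun r s hrs => (hle r s hrs).lt_of_ne (w.injective.ne hrs.ne')
  obtain ⟨i, hi, hmin⟩ := WellFounded.has_min wellFounded_lt {i | ∃ s > i, w i < w s} hdefect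
  refine ⟨i, fun r hr s hs => ?_, hi⟩
  by_contra! hle
  exact hmin r ⟨s, hs, hle.lt_of_ne (w.injective.ne hs.ne)⟩ hr

theorem IsFirstDefect.mul_swap (h : IsFirstDefect w i) (hk : i < k) (hl : i < l) :
    IsFirstDefect (w * swap k l) i := by
  have hpos : ∀ r ≤ i, ∀ s > r, swap k l s > r := by grind
  obtain ⟨hfirst, s, hs, hws⟩ := h
  refine ⟨fun r hr s hs => ?_, swap k l s, hpos i le_rfl s hs, ?_⟩
  · rw [mul_swap_apply_of_ne_of_ne (hr.trans hk).ne (hr.trans hl).ne]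
    exact hfirst r hr _ (hpos r hr.le s hs)
  · rw [mul_swap_apply_of_ne_of_ne hk.ne hl.ne]
    simpa using hws

theorem swap_mem_coverPositions_iff [Fintype α] (hkl : k ⋖ l) (hik : i < k) (hw : w k < w l) :
    swap k l j ∈ coverPositions w i ↔ j ∈ coverPositions (w * swap k l) i ∧
      (w * swap k l * swap i j) l < (w * swap k l * swap i j) k := by
  have hlt := hkl.lt
  have hil := hik.trans hlt
  have hl : ∀ m, m < l ↔ m < k ∨ m = k := fun m => by rw [hkl.lt_iff_le_left, le_iff_lt_or_eq]
  have hk : ∀ m, k < m ↔ l < m ∨ l = m := fun m => by rw [hkl.lt_iff_le_right, le_iff_lt_or_eq]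
  have hinj : ∀ a b, w a = w b → a = b := fun a b h => w.injective h
  have hv : ∀ m, (w * swap k l) m = if m = k then w l else if m = l then w k else w m := by
    grind [Equiv.Perm.mul_apply]
  rw [mem_coverPositions, mem_coverPositions, Equiv.Perm.mul_apply (w * swap k l),
    Equiv.Perm.mul_apply (w * swap k l)]
  simp only [hv]
  by_cases hjk : j = k
  · subst hjk
    rw [Equiv.swap_apply_left, Equiv.swap_apply_right, Equiv.swap_apply_of_ne_of_ne hil.ne' hlt.ne']
    grind
  by_cases hjl : j = l
  · subst hjl
    rw [Equiv.swap_apply_right, Equiv.swap_apply_right, Equiv.swap_apply_of_ne_of_ne hik.ne' hlt.ne]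
    grind
  · rw [Equiv.swap_apply_of_ne_of_ne hjk hjl, Equiv.swap_apply_of_ne_of_ne hil.ne' (Ne.symm hjl),
      Equiv.swap_apply_of_ne_of_ne hik.ne' (Ne.symm hjk)]
    have hjlk : k < j ↔ l < j := by grind
    grind

theorem coverPositions_eq_insert [Fintype α] (hil : i ⋖ l) (hw : w i < w l)
    (hanti : StrictAntiOn w (Set.Ioi i)) :
    coverPositions w i = insert l (coverPositions (w * swap i l) l) := by
  have hlt := hil.lt
  have hgt : ∀ m, i < m ↔ l < m ∨ l = m := fun m => by
    rw [hil.lt_iff_le_right, le_iff_lt_or_eq]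
  have hv : ∀ m > l, (w * swap i l) m = w m := fun m hm =>
    mul_swap_apply_of_ne_of_ne (hlt.trans hm).ne' hm.ne'
  have hvl : (w * swap i l) l = w i := by simp
  have hdec : ∀ j > l, w j < w l := fun j hj => hanti hlt (hlt.trans hj) hj
  ext j
  rw [mem_insert, mem_coverPositions, mem_coverPositions, hvl]
  by_cases hj : l < j
  · rw [hv j hj]
    grind
  · grind

theorem IsFirstDefect.mul_swap_isFirstDefect_or_strictAnti (h : IsFirstDefect w i) (hil : i ⋖ l)
    (hw : w i < w l) (hanti : StrictAntiOn w (Set.Ioi i)) :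
    IsFirstDefect (w * swap i l) l ∨ StrictAnti (w * swap i l) := by
  have hlt := hil.lt
  have hgt : ∀ m, i < m ↔ l < m ∨ l = m := fun m => by
    rw [hil.lt_iff_le_right, le_iff_lt_or_eq]
  have hv : ∀ m, (w * swap i l) m = if m = i then w l else if m = l then w i else w m := by
    grind [Equiv.Perm.mul_apply]
  have hdec : ∀ r s, i < r → r < s → w s < w r := fun r s hr hrs => hanti hr (hr.trans hrs) hrs
  have hpre : ∀ r < l, ∀ s > r, (w * swap i l) s < (w * swap i l) r := fun r hr s hrs => by
    obtain hri | rfl := (hil.lt_iff_le_left.1 hr).lt_or_eq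
    · rw [mul_swap_apply_of_ne_of_ne hri.ne hr.ne]
      exact h.1 r hri _ (by grind)
    · rw [hv, hv, if_pos rfl]
      grind
  by_cases hdefect : ∃ s > l, (w * swap i l) l < (w * swap i l) s
  · exact .inl ⟨hpre, hdefect⟩
  push Not at hdefect
  refine .inr fun r s hrs => ?_
  obtain hrl | rfl | hlr := lt_trichotomy r l
  · exact hpre r hrl s hrs
  · exact (hdefect s hrs).lt_of_ne ((w * swap i r).injective.ne hrs.ne')
  · rw [mul_swap_apply_of_ne_of_ne (hlt.trans hlr).ne' hlr.ne',
      mul_swap_apply_of_ne_of_ne (hlt.trans (hlr.trans hrs)).ne' (hlr.trans hrs).ne']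
    exact hdec r s (hlt.trans hlr) hrs

end Permutations

section Cotransition

variable {n : ℕ} {S : Perm (Fin n) → MvPolynomial (Fin n) ℤ} {w : Perm (Fin n)}
  {i k l : Fin n}

theorem eq_revPerm_of_strictAnti (h : StrictAnti w) : w = Fin.revPerm := by
  have hmono : StrictMono (Fin.rev ∘ w) := Fin.rev_strictAnti.comp h
  have hid : Fin.rev ∘ w = id := (hmono.range_inj strictMono_id).1 <|
    (Fin.rev_surjective.comp w.surjective).range_eq.trans Set.range_id.symm
  ext r : 1
  rw [Fin.revPerm_apply, ← Fin.rev_eq_iff]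
  exact congrFun hid r

/-- `S` assigns to every permutation its Schubert polynomial: a staircase monomial to the longest
permutation, the others being obtained by divided differences at adjacent ascents. -/
structure IsSchubertFamily (S : Perm (Fin n) → MvPolynomial (Fin n) ℤ) : Prop where
  revPerm : S Fin.revPerm = ∏ r : Fin n, X r ^ (n - 1 - (r : ℕ))
  mul_eq_sub_rename : ∀ (w : Perm (Fin n)) (k l : Fin n), k ⋖ l → w k < w l →
    (X k - X l) * S w = S (w * swap k l) - rename (swap k l) (S (w * swap k l))

theorem X_sub_X_ne_zero {σ R : Type*} [CommRing R] [Nontrivial R] {a b : σ} (h : a ≠ b) :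
    (X a - X b : MvPolynomial σ R) ≠ 0 :=
  sub_ne_zero.2 fun hX => h (X_injective hX)

namespace IsSchubertFamily

theorem rename_swap_eq_self (hS : IsSchubertFamily S) (hkl : k ⋖ l) (hw : w k < w l) :
    rename (swap k l) (S w) = S w := by
  have hrec := hS.mul_eq_sub_rename w k l hkl hw
  have hrec' := congrArg (rename (swap k l)) hrec
  have hinvol : ⇑(swap k l) ∘ swap k l = id := (Equiv.swap_apply_self k l ·) |> funext
  rw [map_sub, rename_rename, hinvol, rename_id_apply, map_mul, map_sub, rename_X, rename_X,
    Equiv.swap_apply_left, Equiv.swap_apply_right] at hrec'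
  refine mul_left_cancel₀ (X_sub_X_ne_zero hkl.lt.ne) ?_
  linear_combination -hrec' - hrec

theorem sub_rename_swap_eq_mul (hS : IsSchubertFamily S) (hkl : k ⋖ l) (hw : w l < w k) :
    S w - rename (swap k l) (S w) = (X k - X l) * S (w * swap k l) := by
  rw [hS.mul_eq_sub_rename (w * swap k l) k l hkl (by simpa using hw), mul_assoc,
    Equiv.swap_mul_self, mul_one]

theorem sum_sub_rename_swap_sum (hS : IsSchubertFamily S) (hkl : k ⋖ l) {ι : Type*}
    (A : Finset ι) (u : ι → Perm (Fin n)) :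
    ∑ a ∈ A, S (u a) - rename (swap k l) (∑ a ∈ A, S (u a)) =
      (X k - X l) * ∑ a ∈ A with u a l < u a k, S (u a * swap k l) := by
  rw [map_sum, ← sum_sub_distrib, mul_sum, sum_filter]
  refine sum_congr rfl fun a _ => ?_
  split_ifs with h
  · exact hS.sub_rename_swap_eq_mul hkl h
  · have hlt := (not_lt.1 h).lt_of_ne ((u a).injective.ne hkl.lt.ne)
    rw [hS.rename_swap_eq_self hkl hlt, sub_self]

theorem cotransition_of_mul_swap (hS : IsSchubertFamily S) (hkl : k ⋖ l) (hik : i < k)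
    (hw : w k < w l) (h : X i * S (w * swap k l) =
      ∑ j ∈ coverPositions (w * swap k l) i, S (w * swap k l * swap i j)) :
    X i * S w = ∑ j ∈ coverPositions w i, S (w * swap i j) := by
  have hi : swap k l i = i := Equiv.swap_apply_of_ne_of_ne hik.ne (hik.trans hkl.lt).ne
  have hconj : ∀ j, w * swap k l * swap i j * swap k l = w * swap i (swap k l j) := fun j => by
    rw [mul_swap_mul_swap_mul_swap, hi]
  refine mul_left_cancel₀ (X_sub_X_ne_zero hkl.lt.ne) ?_
  calc (X k - X l) * (X i * S w)
      = X i * S (w * swap k l) - rename (swap k l) (X i * S (w * swap k l)) := by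
        rw [map_mul, rename_X, hi, mul_left_comm, hS.mul_eq_sub_rename w k l hkl hw, mul_sub]
    _ = _ := by rw [h, hS.sum_sub_rename_swap_sum hkl]
    _ = (X k - X l) * ∑ j ∈ coverPositions w i, S (w * swap i j) := by
        congr 1
        refine sum_equiv (swap k l) (fun j => ?_) fun j _ => by rw [hconj]
        rw [mem_filter, swap_mem_coverPositions_iff hkl hik hw]

theorem cotransition_of_isFirstDefect_mul_swap (hS : IsSchubertFamily S) (hil : i ⋖ l)
    (hw : w i < w l) (hanti : StrictAntiOn w (Set.Ioi i)) (hdefect : IsFirstDefect (w * swap i l) l)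
    (h : X l * S (w * swap i l) =
      ∑ j ∈ coverPositions (w * swap i l) l, S (w * swap i l * swap l j)) :
    X i * S w = ∑ j ∈ coverPositions w i, S (w * swap i j) := by
  have hgt : ∀ j ∈ coverPositions (w * swap i l) l, l < j := fun j hj => (mem_coverPositions.1 hj).1
  have hconj : ∀ j ∈ coverPositions (w * swap i l) l,
      w * swap i l * swap l j * swap i l = w * swap i j := fun j hj => by
    rw [mul_swap_mul_swap_mul_swap, Equiv.swap_apply_right,
      Equiv.swap_apply_of_ne_of_ne (hil.lt.trans (hgt j hj)).ne' (hgt j hj).ne']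
  have hdesc : ∀ j ∈ coverPositions (w * swap i l) l,
      (w * swap i l * swap l j) l < (w * swap i l * swap l j) i := fun j hj => by
    rw [mul_swap_apply_of_ne_of_ne hil.lt.ne (hil.lt.trans (hgt j hj)).ne,
      Equiv.Perm.mul_apply _ _ l, Equiv.swap_apply_left]
    exact hdefect.1 i hil.lt j (hil.lt.trans (hgt j hj))
  have hnot : l ∉ coverPositions (w * swap i l) l := fun hl => (hgt l hl).false
  refine mul_left_cancel₀ (X_sub_X_ne_zero hil.lt.ne) ?_
  calc (X i - X l) * (X i * S w)
      = (X i - X l) * S (w * swap i l) +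
          (X l * S (w * swap i l) - rename (swap i l) (X l * S (w * swap i l))) := by
        rw [map_mul, rename_X, Equiv.swap_apply_right]
        linear_combination X i * hS.mul_eq_sub_rename w i l hil hw
    _ = (X i - X l) * ∑ j ∈ coverPositions w i, S (w * swap i j) := by
        rw [h, hS.sum_sub_rename_swap_sum hil, ← mul_add, filter_true_of_mem hdesc,
          coverPositions_eq_insert hil hw hanti, sum_insert hnot,
          sum_congr rfl fun j hj => congrArg S (hconj j hj)]

theorem X_mul_rename_staircase {R : Type*} [CommSemiring R] (hil : i ⋖ l) :
    X i * rename (swap i l) (∏ r : Fin n, X r ^ (n - 1 - (r : ℕ)) : MvPolynomial (Fin n) R) =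
      X l * ∏ r : Fin n, X r ^ (n - 1 - (r : ℕ)) := by
  have hval := Fin.covBy_iff.1 hil
  have hexp : ∀ r : Fin n, n - 1 - (swap i l r : ℕ) + (if r = i then 1 else 0) =
      n - 1 - (r : ℕ) + (if r = l then 1 else 0) := fun r => by
    have := Nat.covBy_iff_add_one_eq.1 hval
    grind
  have hX : ∀ a : Fin n, (X a : MvPolynomial (Fin n) R) = ∏ r, X r ^ (if r = a then 1 else 0) :=
    fun a => by simp
  rw [map_prod]
  simp only [map_pow, rename_X]
  rw [← Equiv.prod_comp (swap i l)]
  simp only [Equiv.swap_apply_self]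
  rw [hX i, hX l, mul_comm, mul_comm (∏ r, _ ^ ite _ _ _), ← prod_mul_distrib, ← prod_mul_distrib]
  simp only [← pow_add, hexp]

theorem cotransition_of_mul_swap_eq_revPerm (hS : IsSchubertFamily S) (hil : i ⋖ l)
    (hw : w i < w l) (h : w * swap i l = Fin.revPerm) :
    X i * S w = ∑ j ∈ coverPositions w i, S (w * swap i j) := by
  have hcover : coverPositions w i = {l} := by
    refine eq_singleton_iff_unique_mem.2 ⟨mem_coverPositions.2
      ⟨hil.lt, hw, fun _ hik hkl => (hil.2 hik hkl).elim⟩, fun j hj => ?_⟩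
    obtain ⟨hij, hwij, -⟩ := mem_coverPositions.1 hj
    by_contra hjl
    have hlj : l < j := (hil.lt_iff_le_right.1 hij).lt_of_ne' hjl
    have hlt : (w * swap i l) j < (w * swap i l) l := by rw [h]; exact Fin.rev_lt_rev.2 hlj
    rw [mul_swap_apply_of_ne_of_ne hij.ne' hjl, Equiv.Perm.mul_apply, Equiv.swap_apply_right] at hlt
    exact hlt.asymm hwij
  refine mul_left_cancel₀ (X_sub_X_ne_zero hil.lt.ne) ?_
  have hrec := hS.mul_eq_sub_rename w i l hil hw
  rw [h] at hrec
  rw [hcover, sum_singleton, h]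
  rw [hS.revPerm] at hrec ⊢
  linear_combination X i * hrec - X_mul_rename_staircase (R := ℤ) hil

theorem cotransition (hS : IsSchubertFamily S) (hdefect : IsFirstDefect w i) :
    X i * S w = ∑ j ∈ coverPositions w i, S (w * swap i j) := by
  induction w using ascent_induction generalizing i with
  | step w ih =>
  by_cases hasc : ∃ k l, k ⋖ l ∧ i < k ∧ w k < w l
  · obtain ⟨k, l, hkl, hik, hw⟩ := hasc
    exact hS.cotransition_of_mul_swap hkl hik hw
      (ih k l hkl.lt hw (hdefect.mul_swap hik (hik.trans hkl.lt)))
  have hanti : StrictAntiOn w (Set.Ioi i) := by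
    refine strictAntiOn_of_succ_lt Set.ordConnected_Ioi fun k hmax hk _ => ?_
    have hkl := Order.covBy_succ_of_not_isMax hmax
    have hle := not_lt.1 fun hlt => hasc ⟨k, _, hkl, hk, hlt⟩
    exact hle.lt_of_ne (w.injective.ne hkl.lt.ne')
  obtain ⟨s, his, hws⟩ := hdefect.2
  obtain ⟨l, hil, hls⟩ := exists_covBy_le_of_lt his
  have hwl : w i < w l := hws.trans_le (hanti.antitoneOn hil.lt his hls)
  rcases hdefect.mul_swap_isFirstDefect_or_strictAnti hil hwl hanti with hl | hrev
  · exact hS.cotransition_of_isFirstDefect_mul_swap hil hwl hanti hl (ih i l hil.lt hwl hl)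
  · exact hS.cotransition_of_mul_swap_eq_revPerm hil hwl (eq_revPerm_of_strictAnti hrev)

end IsSchubertFamily

end Cotransition

section GaleSets

variable {n : ℕ} {R : Type*}

/-- The sum of the entries of a vector in the rows `r < t`, as a linear functional. -/
def prefixSum [CommSemiring R] (t : ℕ) : (Fin n → R) →ₗ[R] R :=
  ∑ r ∈ {r : Fin n | (r : ℕ) < t}, LinearMap.proj r

/-- The vector equal to `u` in the rows `r < t` and to `v` in the others. -/
def splice (t : ℕ) (u v : Fin n → R) : Fin n → R := fun r => if (r : ℕ) < t then u r else v r

theorem sum_splice_swap [AddCommMonoid R] {C : Type*} [Fintype C] [DecidableEq C]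
    (x : C → Fin n → R) (a b : C) (t : ℕ) :
    ∑ c, splice t (x (swap a b c)) (x c) = ∑ c, x c := by
  ext r
  simp only [Finset.sum_apply, splice]
  split_ifs
  exacts [Equiv.sum_comp (swap a b) fun c => x c r, rfl]

section Semiring

variable [CommSemiring R] {t : ℕ} {u v : Fin n → R}

theorem prefixSum_apply (t : ℕ) (v : Fin n → R) :
    prefixSum t v = ∑ r ∈ {r : Fin n | (r : ℕ) < t}, v r := by
  simp [prefixSum]

theorem prefixSum_zero (v : Fin n → R) : prefixSum 0 v = 0 := by
  simp [prefixSum_apply]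

theorem prefixSum_succ (i : Fin n) (v : Fin n → R) :
    prefixSum (i + 1) v = prefixSum i v + v i := by
  have hinsert : ({r | (r : ℕ) < i + 1} : Finset (Fin n)) =
      insert i ({r | (r : ℕ) < i} : Finset (Fin n)) := by
    ext r
    simp only [mem_filter_univ, mem_insert, Fin.ext_iff]
    omega
  rw [prefixSum_apply, prefixSum_apply, hinsert, sum_insert (by simp), add_comm]

theorem prefixSum_eq_sum (h : ∀ r : Fin n, t ≤ r → v r = 0) : prefixSum t v = ∑ r, v r := by
  rw [prefixSum_apply]
  exact sum_filter_of_ne fun r _ hr => not_le.1 (mt (h r) hr)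

theorem prefixSum_of_le (ht : n ≤ t) (v : Fin n → R) : prefixSum t v = ∑ r, v r :=
  prefixSum_eq_sum fun r hr => absurd r.is_lt (ht.trans hr).not_gt

theorem prefixSum_congr (h : ∀ r : Fin n, r < t → u r = v r) :
    prefixSum t u = prefixSum t v := by
  rw [prefixSum_apply, prefixSum_apply]
  exact sum_congr rfl fun r hr => h r (mem_filter.1 hr).2

theorem prefixSum_single (t : ℕ) (i : Fin n) (a : R) :
    prefixSum t (Pi.single i a) = if i < t then a else 0 := by
  simp [prefixSum_apply, Pi.single_apply]

/-- The vectors with entries in `[0, 1]` and the same sum as `d` whose prefix sums dominate those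
of `d`. If `d` is the indicator vector of a column of a diagram, this is the polytope of the
Schubert matroid of that column. -/
def galeSet [PartialOrder R] (d : Fin n → R) : Set (Fin n → R) :=
  {v | (∀ r, 0 ≤ v r ∧ v r ≤ 1) ∧ (∀ t, prefixSum t d ≤ prefixSum t v) ∧ ∑ r, v r = ∑ r, d r}

end Semiring

section Ring

variable [CommRing R] {t : ℕ} {d u v : Fin n → R}

theorem prefixSum_splice {s : ℕ} (h : prefixSum t u = prefixSum t v) :
    prefixSum s (splice t u v) = if s ≤ t then prefixSum s u else prefixSum s v := by
  split_ifs with hst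
  · exact prefixSum_congr fun r hr => if_pos (hr.trans_le hst)
  · have hsplit : splice t u v = v + splice t (u - v) 0 := by
      ext r
      simp only [splice, Pi.add_apply, Pi.sub_apply, Pi.zero_apply]
      split_ifs <;> ring
    have hdiff : prefixSum s (splice t (u - v) 0) = prefixSum t (u - v) := by
      rw [prefixSum_apply, prefixSum_apply, sum_filter, sum_filter]
      refine sum_congr rfl fun r _ => ?_
      simp only [splice, Pi.zero_apply]
      split_ifs <;> first | rfl | omega
    rw [hsplit, map_add, hdiff, map_sub, h, sub_self, add_zero]

variable [PartialOrder R]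

theorem splice_mem_galeSet {d' : Fin n → R} (hv : v ∈ galeSet d) (hu : u ∈ galeSet d')
    (hd : ∀ r : Fin n, r < t → d r = d' r) (h : prefixSum t u = prefixSum t v) :
    splice t u v ∈ galeSet d := by
  refine ⟨fun r => ?_, fun s => ?_, ?_⟩
  · unfold splice
    split_ifs
    exacts [hu.1 r, hv.1 r]
  · rw [prefixSum_splice h]
    split_ifs with hst
    · exact (prefixSum_congr fun r hr => hd r (hr.trans_le hst)).trans_le (hu.2.1 s)
    · exact hv.2.1 s
  · have hn : n ≤ n + t + 1 := by omega
    rw [← prefixSum_of_le hn, prefixSum_splice h, if_neg (by omega), prefixSum_of_le hn, hv.2.2]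

theorem splice_swap_mem_galeSet {C : Type*} [DecidableEq C] {D x : C → Fin n → R} {a b : C}
    (hx : ∀ c, x c ∈ galeSet (D c)) (hD : ∀ r : Fin n, r < t → D a r = D b r)
    (h : prefixSum t (x a) = prefixSum t (x b)) (c : C) :
    splice t (x (swap a b c)) (x c) ∈ galeSet (D c) := by
  rcases eq_or_ne c a with rfl | hca
  · rw [Equiv.swap_apply_left]
    exact splice_mem_galeSet (hx c) (hx b) hD h.symm
  rcases eq_or_ne c b with rfl | hcb
  · rw [Equiv.swap_apply_right]
    exact splice_mem_galeSet (hx c) (hx a) (fun r hr => (hD r hr).symm) h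
  · rw [Equiv.swap_apply_of_ne_of_ne hca hcb]
    exact splice_mem_galeSet (hx c) (hx c) (fun _ _ => rfl) rfl

end Ring

section OrderedRing

variable [CommRing R] [LinearOrder R] [IsStrictOrderedRing R] {t : ℕ} {d u v : Fin n → R}

theorem prefixSum_le_prefixSum (h : ∀ r : Fin n, r < t → u r ≤ v r) :
    prefixSum t u ≤ prefixSum t v := by
  rw [prefixSum_apply, prefixSum_apply]
  exact sum_le_sum fun r hr => h r (mem_filter.1 hr).2

theorem prefixSum_le_sum (h : ∀ r, 0 ≤ v r) : prefixSum t v ≤ ∑ r, v r := by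
  rw [prefixSum_apply]
  exact sum_le_sum_of_subset_of_nonneg (subset_univ _) fun r _ _ => h r

theorem add_mem_galeSet {z : Fin n → R} (hv : v ∈ galeSet d)
    (hz : ∀ r, 0 ≤ (v + z) r ∧ (v + z) r ≤ 1) : v + z ∈ galeSet (d + z) := by
  refine ⟨hz, fun t => ?_, ?_⟩
  · rw [map_add, map_add]
    exact add_le_add_left (hv.2.1 t) _
  · simp only [Pi.add_apply, sum_add_distrib, hv.2.2]

theorem le_apply_of_mem_galeSet {i : Fin n} (hv : v ∈ galeSet d) (hd : ∀ r < i, d r = 1) :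
    d i ≤ v i := by
  have hbelow : prefixSum i v ≤ prefixSum i d :=
    prefixSum_le_prefixSum fun r hr => (hv.1 r).2.trans_eq (hd r hr).symm
  have hupto := hv.2.1 (i + 1)
  rw [prefixSum_succ, prefixSum_succ] at hupto
  linarith

theorem prefixSum_eq_of_mem_galeSet (hv : v ∈ galeSet d) (hd : ∀ r : Fin n, t ≤ r → d r = 0) :
    prefixSum t v = prefixSum t d := by
  refine le_antisymm ?_ (hv.2.1 t)
  rw [prefixSum_eq_sum hd, ← hv.2.2]
  exact prefixSum_le_sum fun r => (hv.1 r).1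

theorem galeSet_eq_singleton {k : ℕ} (hd : ∀ r : Fin n, d r = if r < k then 1 else 0) :
    galeSet d = {d} := by
  refine Set.eq_singleton_iff_unique_mem.2
    ⟨⟨fun r => ?_, fun _ => le_rfl, rfl⟩, fun v hv => funext fun r => Eq.symm ?_⟩
  · rw [hd]
    split_ifs <;> simp
  · refine (sum_eq_sum_iff_of_le fun s _ => ?_).1 hv.2.2.symm r (mem_univ r)
    by_cases hs : (s : ℕ) < k
    · refine le_apply_of_mem_galeSet hv fun r hr => ?_
      rw [hd, if_pos ((Fin.lt_def.1 hr).trans hs)]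
    · rw [hd, if_neg hs]
      exact (hv.1 s).1

end OrderedRing

/-- Discrete continuity: the difference of the two prefix sums changes by at most one at each
step, so it stays positive as long as it does not vanish. -/
theorem prefixSum_add_one_le {u v : Fin n → ℤ} {i : Fin n} {q : ℕ} (hq : q ≤ n)
    (hu : ∀ r, 0 ≤ u r) (hv : ∀ r, v r ≤ 1) (hi : prefixSum i v ≤ prefixSum i u) (hlt : v i < u i)
    (hne : ∀ t, (i : ℕ) < t → t ≤ q → prefixSum t u ≠ prefixSum t v) {t : ℕ} (hit : (i : ℕ) < t)
    (htq : t ≤ q) : prefixSum t v + 1 ≤ prefixSum t u := by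
  induction t, hit using Nat.le_induction with
  | base =>
    rw [prefixSum_succ, prefixSum_succ]
    omega
  | succ t hit ih =>
    have hlead := ih (by omega)
    have hnext := hne (t + 1) (by omega) htq
    have hsuccu := prefixSum_succ ⟨t, by omega⟩ u
    have hsuccv := prefixSum_succ ⟨t, by omega⟩ v
    have := hu ⟨t, by omega⟩
    have := hv ⟨t, by omega⟩
    simp only at hsuccu hsuccv
    omega

end GaleSets

section Fillings

open scoped Pointwise

variable {n : ℕ} {w : Perm (Fin n)} {i j k b s r : Fin n}

/-- The indicator vector of the column of the Rothe diagram of `w` which contains the value `w s`.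
Columns are labelled by positions `s` instead of values, so that `w` and `w * swap i j` have
similar columns with the same label. -/
def rotheColumn (w : Perm (Fin n)) (s r : Fin n) : ℤ := if r < s ∧ w s < w r then 1 else 0

theorem rotheColumn_eq_zero_of_forall_le (hk : ∀ r ≥ i, w r ≤ w k) (hr : i ≤ r) :
    rotheColumn w k r = 0 :=
  if_neg fun h => (hk r hr).not_gt h.2

theorem rotheColumn_eq_zero_of_le (hr : s ≤ r) : rotheColumn w s r = 0 :=
  if_neg fun h => hr.not_gt h.1

theorem IsFirstDefect.rotheColumn_eq_one (h : IsFirstDefect w i) (hs : i ≤ s) (hr : r < i) :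
    rotheColumn w s r = 1 :=
  if_pos ⟨hr.trans_le hs, h.1 r hr s (hr.trans_le hs)⟩

theorem IsFirstDefect.rotheColumn_eq_rotheColumn (h : IsFirstDefect w i) (hik : i < k)
    (hib : i < b) (hwk : w i < w k) (hwb : w k < w b) {q : Fin n} (hqk : q ≤ k) (hqb : q ≤ b)
    (hq : ∀ m, i < m → m < q → ¬ (w i < w m ∧ w m < w b)) (hr : r < q) :
    rotheColumn w k r = rotheColumn w b r := by
  rcases lt_trichotomy r i with hri | rfl | hir
  · rw [h.rotheColumn_eq_one hik.le hri, h.rotheColumn_eq_one hib.le hri]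
  · rw [rotheColumn, rotheColumn, if_neg fun hlt => hlt.2.asymm hwk,
      if_neg fun hlt => hlt.2.asymm (hwk.trans hwb)]
  · have hgap := hq r hir hr
    have hne : w r ≠ w b := w.injective.ne (hr.trans_le hqb).ne
    unfold rotheColumn
    congr 1
    grind

theorem IsFirstDefect.rotheColumn_mul_swap_left (h : IsFirstDefect w i) (hij : i < j) :
    rotheColumn (w * swap i j) i = rotheColumn w i := by
  ext r
  by_cases hr : r < i
  · have hlt : (w * swap i j) i < (w * swap i j) r := by
      rw [mul_swap_apply_of_ne_of_ne hr.ne (hr.trans hij).ne, Perm.mul_apply,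
        Equiv.swap_apply_left]
      exact h.1 r hr j (hr.trans hij)
    rw [h.rotheColumn_eq_one le_rfl hr, rotheColumn, if_pos ⟨hr, hlt⟩]
  · rw [rotheColumn_eq_zero_of_le (not_lt.1 hr), rotheColumn_eq_zero_of_le (not_lt.1 hr)]

theorem IsFirstDefect.rotheColumn_mul_swap_right (h : IsFirstDefect w i)
    (hj : j ∈ coverPositions w i) :
    rotheColumn (w * swap i j) j = rotheColumn w j + Pi.single i 1 := by
  obtain ⟨hij, hw, hcover⟩ := mem_coverPositions.1 hj
  ext r
  rw [Pi.add_apply, Pi.single_apply]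
  unfold rotheColumn
  have hbefore := h.1 r
  have hbetween := hcover r
  have hne : r ≠ j → w r ≠ w j := fun hrj => w.injective.ne hrj
  have hv : (w * swap i j) r = if r = i then w j else if r = j then w i else w r := by
    grind [Perm.mul_apply]
  have hvj : (w * swap i j) j = w i := by simp
  rw [hv, hvj]
  grind

theorem rotheColumn_mul_swap_of_ne_of_ne (hj : j ∈ coverPositions w i) (hsi : s ≠ i)
    (hsj : s ≠ j) : rotheColumn (w * swap i j) s = rotheColumn w s +
      if j < s ∧ w i < w s ∧ w s < w j then Pi.single i 1 - Pi.single j 1 else 0 := by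
  obtain ⟨hij, hw, hcover⟩ := mem_coverPositions.1 hj
  ext r
  have hbetween := hcover s
  have hne : w s ≠ w i ∧ w s ≠ w j := ⟨w.injective.ne hsi, w.injective.ne hsj⟩
  have hv : (w * swap i j) r = if r = i then w j else if r = j then w i else w r := by
    grind [Perm.mul_apply]
  rw [Pi.add_apply]
  unfold rotheColumn
  rw [mul_swap_apply_of_ne_of_ne hsi hsj, hv]
  split_ifs <;> simp only [Pi.sub_apply, Pi.zero_apply, Pi.single_apply] <;> grind

theorem prefixSum_rotheColumn_le_mul_swap (hj : j ∈ coverPositions w i) (hsi : s ≠ i)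
    (hsj : s ≠ j) (t : ℕ) :
    prefixSum t (rotheColumn w s) ≤ prefixSum t (rotheColumn (w * swap i j) s) := by
  have hij := Fin.lt_def.1 (mem_coverPositions.1 hj).1
  rw [rotheColumn_mul_swap_of_ne_of_ne hj hsi hsj, map_add]
  split_ifs
  · rw [map_sub, prefixSum_single, prefixSum_single]
    grind
  · simp

/-- `IsMinimalHole w i x b`: among all choices of a filling `y` of the columns of the Rothe diagram
of `w` which has the same row sums as `x` and of a position `k > i` with `w i < w k` and
`y k i = 0`, the value `w k` is minimal for `x` and `b`. -/
structure IsMinimalHole (w : Perm (Fin n)) (i : Fin n) (x : Fin n → Fin n → ℤ) (b : Fin n) :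
    Prop where
  mem_galeSet : ∀ c, x c ∈ galeSet (rotheColumn w c)
  lt : i < b
  apply_lt_apply : w i < w b
  apply_eq_zero : x b i = 0
  minimal : ∀ y : Fin n → Fin n → ℤ, (∀ c, y c ∈ galeSet (rotheColumn w c)) →
    ∑ c, y c = ∑ c, x c → ∀ k > i, w i < w k → y k i = 0 → w b ≤ w k

theorem IsFirstDefect.exists_isMinimalHole (h : IsFirstDefect w i) {x : Fin n → Fin n → ℤ}
    (hx : ∀ c, x c ∈ galeSet (rotheColumn w c)) :
    ∃ y b, IsMinimalHole w i y b ∧ ∑ c, y c = ∑ c, x c := by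
  let holes : Set (Fin n) := {c | ∃ (y : Fin n → Fin n → ℤ) (b : Fin n),
    (∀ c, y c ∈ galeSet (rotheColumn w c)) ∧ ∑ c, y c = ∑ c, x c ∧
    i < b ∧ w i < w b ∧ y b i = 0 ∧ w b = c}
  have hnonempty : holes.Nonempty := by
    obtain ⟨m, him, hmax⟩ := exists_max_image (Finset.Ici i) w ⟨i, mem_Ici.2 le_rfl⟩
    obtain ⟨s, his, hws⟩ := h.2
    have hwm : w i < w m := hws.trans_le (hmax s (mem_Ici.2 his.le))
    have hm : i < m := (mem_Ici.1 him).lt_of_ne fun hne => hwm.ne (by rw [hne])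
    have hzero : ∀ r ≥ i, rotheColumn w m r = 0 := fun r =>
      rotheColumn_eq_zero_of_forall_le fun r hr => hmax r (mem_Ici.2 hr)
    have hi : prefixSum i (x m) = prefixSum i (rotheColumn w m) :=
      prefixSum_eq_of_mem_galeSet (hx m) hzero
    have hsucc : prefixSum (i + 1) (x m) = prefixSum (i + 1) (rotheColumn w m) :=
      prefixSum_eq_of_mem_galeSet (hx m) fun r hr => hzero r (Fin.le_def.2 (by omega))
    rw [prefixSum_succ, prefixSum_succ, hzero i le_rfl, hi] at hsucc
    exact ⟨_, x, m, hx, rfl, hm, hwm, add_left_cancel hsucc, rfl⟩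
  obtain ⟨_, ⟨y, b, hy, hsum, hib, hwb, hyb, rfl⟩, hmin⟩ :=
    WellFounded.has_min wellFounded_lt holes hnonempty
  exact ⟨y, b, ⟨hy, hib, hwb, hyb, fun y' hy' hsum' k hik hwk hk =>
    not_lt.1 (hmin _ ⟨y', k, hy', hsum'.trans hsum, hik, hwk, hk, rfl⟩)⟩, hsum⟩

namespace IsMinimalHole

variable {x : Fin n → Fin n → ℤ}

theorem apply_eq_one (hb : IsMinimalHole w i x b) (hik : i < k) (hwk : w i < w k)
    (hwb : w k < w b) : x k i = 1 := by
  have hne : x k i ≠ 0 := fun hk => (hb.minimal x hb.mem_galeSet rfl k hik hwk hk).not_gt hwb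
  have := (hb.mem_galeSet k).1 i
  omega

theorem prefixSum_ne_prefixSum (hb : IsMinimalHole w i x b) (hik : i < k) (hwk : w i < w k)
    (hwb : w k < w b) {t : ℕ} (hit : i < t)
    (hcol : ∀ r : Fin n, r < t → rotheColumn w k r = rotheColumn w b r) :
    prefixSum t (x k) ≠ prefixSum t (x b) := fun htie => by
  refine (hb.minimal _ (splice_swap_mem_galeSet hb.mem_galeSet hcol htie)
    (sum_splice_swap x k b t) k hik hwk ?_).not_gt hwb
  rw [splice, if_pos hit, Equiv.swap_apply_left, hb.apply_eq_zero]

theorem prefixSum_add_one_le (hb : IsMinimalHole w i x b) (h : IsFirstDefect w i) (hik : i < k)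
    (hwk : w i < w k) (hwb : w k < w b) {q : Fin n}
    (hcol : ∀ r < q, rotheColumn w k r = rotheColumn w b r) {t : ℕ} (hit : i < t) (htq : t ≤ q) :
    prefixSum t (x b) + 1 ≤ prefixSum t (x k) := by
  refine Schubert.prefixSum_add_one_le q.is_lt.le (fun r => ((hb.mem_galeSet k).1 r).1)
    (fun r => ((hb.mem_galeSet b).1 r).2) ?_
    (by rw [hb.apply_eq_zero, hb.apply_eq_one hik hwk hwb]; exact zero_lt_one) (fun t hit htq =>
      hb.prefixSum_ne_prefixSum hik hwk hwb hit fun r hr => hcol r (hr.trans_le htq)) hit htq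
  refine (prefixSum_le_prefixSum fun r hr => ?_).trans ((hb.mem_galeSet k).2.1 i)
  rw [h.rotheColumn_eq_one hik.le hr]
  exact ((hb.mem_galeSet b).1 r).2

theorem mem_coverPositions (hb : IsMinimalHole w i x b) (h : IsFirstDefect w i) :
    b ∈ coverPositions w i := by
  refine Schubert.mem_coverPositions.2 ⟨hb.lt, hb.apply_lt_apply, ?_⟩
  by_contra! hbetween
  obtain ⟨s, ⟨his, hsb, hws, hwb⟩, hmin⟩ := WellFounded.has_min wellFounded_lt
    {s | i < s ∧ s < b ∧ w i < w s ∧ w s < w b} hbetween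
  have hcol : ∀ r < s, rotheColumn w s r = rotheColumn w b r := fun r =>
    h.rotheColumn_eq_rotheColumn his hb.lt hws hwb le_rfl hsb.le
      fun m him hms hwm => hmin m ⟨him, hms.trans hsb, hwm⟩ hms
  have hlead := hb.prefixSum_add_one_le h his hws hwb hcol his le_rfl
  have hfull : prefixSum s (x s) = prefixSum s (rotheColumn w s) :=
    prefixSum_eq_of_mem_galeSet (hb.mem_galeSet s) fun r => rotheColumn_eq_zero_of_le
  rw [hfull, prefixSum_congr hcol] at hlead
  exact ((hb.mem_galeSet b).2.1 s).not_gt (Int.add_one_le_iff.1 hlead)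

theorem apply_mem_galeSet_of_ne_of_ne (hb : IsMinimalHole w i x b) (h : IsFirstDefect w i)
    (hsi : s ≠ i) (hsb : s ≠ b) : x s ∈ galeSet (rotheColumn (w * swap i b) s) := by
  have hmem := hb.mem_coverPositions h
  have hs := hb.mem_galeSet s
  rw [rotheColumn_mul_swap_of_ne_of_ne hmem hsi hsb]
  split_ifs with hlt
  · obtain ⟨hbs, hws, hwb⟩ := hlt
    have his := hb.lt.trans hbs
    have hcol : ∀ r < b, rotheColumn w s r = rotheColumn w b r := fun r =>
      h.rotheColumn_eq_rotheColumn his hb.lt hws hwb hbs.le le_rfl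
        (Schubert.mem_coverPositions.1 hmem).2.2
    refine ⟨hs.1, fun t => ?_, ?_⟩
    · rw [map_add, map_sub, prefixSum_single, prefixSum_single]
      have hle := hs.2.1 t
      by_cases ht : (i : ℕ) < t ∧ t ≤ b
      · have hlead := hb.prefixSum_add_one_le h his hws hwb hcol ht.1 ht.2
        have hdom := (hb.mem_galeSet b).2.1 t
        rw [← prefixSum_congr fun r hr => hcol r (hr.trans_le ht.2)] at hdom
        grind
      · have := Fin.lt_def.1 hb.lt
        grind
    · simp [hs.2.2, sum_add_distrib]
  · rwa [add_zero]

theorem add_single_mem_galeSet (hb : IsMinimalHole w i x b) (h : IsFirstDefect w i) (c : Fin n) :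
    (x + Pi.single b (Pi.single i 1) : Fin n → Fin n → ℤ) c ∈
      galeSet (rotheColumn (w * swap i b) c) := by
  rw [Pi.add_apply]
  rcases eq_or_ne c b with rfl | hcb
  · rw [Pi.single_eq_same, h.rotheColumn_mul_swap_right (hb.mem_coverPositions h)]
    refine add_mem_galeSet (hb.mem_galeSet c) fun r => ?_
    rw [Pi.add_apply, Pi.single_apply]
    split_ifs with hr
    · simp [hr, hb.apply_eq_zero]
    · simpa using (hb.mem_galeSet c).1 r
  rw [Pi.single_eq_of_ne hcb, add_zero]
  rcases eq_or_ne c i with rfl | hci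
  · rw [h.rotheColumn_mul_swap_left hb.lt]
    exact hb.mem_galeSet c
  · exact hb.apply_mem_galeSet_of_ne_of_ne h hci hcb

end IsMinimalHole

theorem IsFirstDefect.sub_single_mem_galeSet (h : IsFirstDefect w i) (hj : j ∈ coverPositions w i)
    {x : Fin n → Fin n → ℤ} (hx : ∀ c, x c ∈ galeSet (rotheColumn (w * swap i j) c)) (c : Fin n) :
    (x - Pi.single j (Pi.single i 1) : Fin n → Fin n → ℤ) c ∈ galeSet (rotheColumn w c) := by
  have hij := (mem_coverPositions.1 hj).1
  rw [Pi.sub_apply]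
  rcases eq_or_ne c j with rfl | hcj
  · have hcol := h.rotheColumn_mul_swap_right hj
    have hxi : 1 ≤ x c i := by
      have hbefore : ∀ r < i, rotheColumn (w * swap i c) c r = 1 := fun r hr => by
        rw [hcol, Pi.add_apply, h.rotheColumn_eq_one hij.le hr, Pi.single_eq_of_ne hr.ne, add_zero]
      have hle := le_apply_of_mem_galeSet (hx c) hbefore
      rwa [hcol, Pi.add_apply, rotheColumn, if_neg fun hlt => hlt.2.asymm
        (mem_coverPositions.1 hj).2.1, Pi.single_eq_same, zero_add] at hle
    rw [Pi.single_eq_same, sub_eq_add_neg, ← add_neg_cancel_right (rotheColumn w c)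
      (Pi.single i 1), ← hcol]
    refine add_mem_galeSet (hx c) fun r => ?_
    have := (hx c).1 r
    rw [Pi.add_apply, Pi.neg_apply, Pi.single_apply]
    grind
  rw [Pi.single_eq_of_ne hcj, sub_zero]
  rcases eq_or_ne c i with rfl | hci
  · rw [← h.rotheColumn_mul_swap_left hij]
    exact hx c
  · refine ⟨(hx c).1, fun t =>
      (prefixSum_rotheColumn_le_mul_swap hj hci hcj t).trans ((hx c).2.1 t), ?_⟩
    rw [(hx c).2.2, rotheColumn_mul_swap_of_ne_of_ne hj hci hcj]
    split_ifs <;> simp [sum_add_distrib]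

theorem IsFirstDefect.mem_sum_galeSet_iff (h : IsFirstDefect w i) {p : Fin n → ℤ} :
    p ∈ ∑ c, galeSet (rotheColumn w c) ↔ ∃ j ∈ coverPositions w i,
      p + Pi.single i 1 ∈ ∑ c, galeSet (rotheColumn (w * swap i j) c) := by
  simp only [Set.mem_fintype_sum]
  constructor
  · rintro ⟨x, hx, rfl⟩
    obtain ⟨y, b, hb, hsum⟩ := h.exists_isMinimalHole hx
    refine ⟨b, hb.mem_coverPositions h, _, hb.add_single_mem_galeSet h, ?_⟩
    simp [sum_add_distrib, hsum]
  · rintro ⟨j, hj, x, hx, hsum⟩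
    refine ⟨_, h.sub_single_mem_galeSet hj hx, ?_⟩
    simp [hsum]

end Fillings

section Support

open scoped Pointwise

variable {n : ℕ} {w : Perm (Fin n)} {i : Fin n} {S : Perm (Fin n) → MvPolynomial (Fin n) ℤ}

theorem rotheColumn_revPerm (s r : Fin n) :
    rotheColumn Fin.revPerm s r = if r < s then 1 else 0 := by
  simp [rotheColumn]

theorem sum_galeSet_rotheColumn_revPerm :
    ∑ c, galeSet (rotheColumn (Fin.revPerm : Perm (Fin n)) c) =
      {fun r : Fin n => ((n - 1 - (r : ℕ) : ℕ) : ℤ)} := by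
  have hcol : ∀ c : Fin n, galeSet (rotheColumn Fin.revPerm c) = {rotheColumn Fin.revPerm c} :=
    fun c => galeSet_eq_singleton (rotheColumn_revPerm c)
  simp only [hcol]
  rw [Set.finsetSum_singleton]
  congr 1
  ext r
  simp only [Finset.sum_apply, rotheColumn_revPerm, sum_boole, filter_lt_eq_Ioi, Fin.card_Ioi]

namespace IsSchubertFamily

theorem coeff_revPerm (hS : IsSchubertFamily S) (d : Fin n →₀ ℕ) :
    coeff d (S Fin.revPerm) = if ∀ r, d r = n - 1 - (r : ℕ) then 1 else 0 := by
  have hmonomial : S Fin.revPerm =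
      monomial (Finsupp.equivFunOnFinite.symm fun r : Fin n => n - 1 - (r : ℕ)) 1 := by
    rw [hS.revPerm, monomial_eq]
    simp [Finsupp.prod_fintype]
  rw [hmonomial, coeff_monomial]
  simp [Finsupp.ext_iff, eq_comm]

theorem coeff_eq_sum (hS : IsSchubertFamily S) (h : IsFirstDefect w i) (d : Fin n →₀ ℕ) :
    coeff d (S w) =
      ∑ j ∈ coverPositions w i, coeff (Finsupp.single i 1 + d) (S (w * swap i j)) := by
  rw [← coeff_X_mul d i (S w), hS.cotransition h, coeff_sum]

theorem coeff_nonneg (hS : IsSchubertFamily S) (w : Perm (Fin n)) (d : Fin n →₀ ℕ) :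
    0 ≤ coeff d (S w) := by
  induction w using ascent_induction generalizing d with
  | step w ih =>
  by_cases hw : StrictAnti w
  · rw [eq_revPerm_of_strictAnti hw, hS.coeff_revPerm]
    split_ifs <;> simp
  · obtain ⟨i, hi⟩ := exists_isFirstDefect hw
    rw [hS.coeff_eq_sum hi]
    exact sum_nonneg fun j hj =>
      ih i j (mem_coverPositions.1 hj).1 (mem_coverPositions.1 hj).2.1 _

theorem coeff_ne_zero_iff (hS : IsSchubertFamily S) (w : Perm (Fin n)) (d : Fin n →₀ ℕ) :
    coeff d (S w) ≠ 0 ↔ (fun r => (d r : ℤ)) ∈ ∑ c, galeSet (rotheColumn w c) := by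
  induction w using ascent_induction generalizing d with
  | step w ih =>
  by_cases hw : StrictAnti w
  · rw [eq_revPerm_of_strictAnti hw, hS.coeff_revPerm, sum_galeSet_rotheColumn_revPerm]
    simp [funext_iff]
  · obtain ⟨i, hi⟩ := exists_isFirstDefect hw
    have hcast : (fun r => ((Finsupp.single i 1 + d : Fin n →₀ ℕ) r : ℤ)) =
        (fun r => (d r : ℤ)) + Pi.single i 1 := by
      ext r
      simp [Finsupp.single_apply, Pi.single_apply, add_comm, eq_comm]
    rw [hS.coeff_eq_sum hi, Ne, sum_eq_zero_iff_of_nonneg fun j _ => hS.coeff_nonneg _ _,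
      hi.mem_sum_galeSet_iff, ← hcast]
    push Not
    exact exists_congr fun j => and_congr_right fun hj =>
      ih i j (mem_coverPositions.1 hj).1 (mem_coverPositions.1 hj).2.1 _

end IsSchubertFamily

end Support

section TightCells

variable {n : ℕ} {R : Type*} [CommRing R] {C : Type*} [Fintype C] {Z : AddSubgroup R}

theorem prefixSum_mem {v : Fin n → R} (t : ℕ) (h : ∀ r : Fin n, r < t → v r ∈ Z) :
    prefixSum t v ∈ Z := by
  rw [prefixSum_apply]
  exact sum_mem fun r hr => h r (mem_filter.1 hr).2

theorem prefixSum_eq_add_sum_Ioo {v : Fin n → R} {r s : Fin n} (h : r < s) :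
    prefixSum s v = prefixSum (r + 1) v + ∑ a ∈ Ioo r s, v a := by
  have hunion : ({a | (a : ℕ) < s} : Finset (Fin n)) =
      ({a | (a : ℕ) < r + 1} : Finset (Fin n)) ∪ Ioo r s := by
    grind
  rw [prefixSum_apply, prefixSum_apply, hunion, sum_union]
  rw [disjoint_left]
  grind

theorem exists_lt_notMem_of_prefixSum_notMem {v : Fin n → R} {s : Fin n}
    (h : prefixSum s v ∉ Z) :
    ∃ r < s, v r ∉ Z ∧ (∀ a ∈ Ioo r s, v a ∈ Z) ∧ prefixSum (r + 1) v ∉ Z := by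
  have hexists : ∃ r < s, v r ∉ Z := by
    by_contra! hmem
    exact h (prefixSum_mem s hmem)
  obtain ⟨r, ⟨hrs, hr⟩, hmax⟩ := WellFounded.has_min wellFounded_gt {r | r < s ∧ v r ∉ Z} hexists
  have hbetween : ∀ a ∈ Ioo r s, v a ∈ Z := fun a ha => by
    by_contra hva
    exact hmax a ⟨(mem_Ioo.1 ha).2, hva⟩ (mem_Ioo.1 ha).1
  refine ⟨r, hrs, hr, hbetween, fun hmem => h ?_⟩
  rw [prefixSum_eq_add_sum_Ioo hrs]
  exact add_mem hmem (sum_mem hbetween)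

open Classical in
/-- The cells `(c, r)` of the array `x` whose entries do not lie in `Z`. -/
noncomputable def fractionalCells (Z : AddSubgroup R) (x : C → Fin n → R) : Finset (C × Fin n) :=
  {s | x s.1 s.2 ∉ Z}

open Classical in
/-- The fractional cells at which the prefix sum of the column `c` returns to `Z`. -/
noncomputable def segmentEnds (Z : AddSubgroup R) (x : C → Fin n → R) : Finset (C × Fin n) :=
  {s ∈ fractionalCells Z x | prefixSum (s.2 + 1) (x s.1) ∈ Z}

variable {x z : C → Fin n → R} {c : C} {r : Fin n}

theorem mem_fractionalCells : (c, r) ∈ fractionalCells Z x ↔ x c r ∉ Z := by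
  simp [fractionalCells]

theorem mem_segmentEnds :
    (c, r) ∈ segmentEnds Z x ↔ x c r ∉ Z ∧ prefixSum (r + 1) (x c) ∈ Z := by
  simp [segmentEnds, mem_fractionalCells]

theorem segmentEnds_subset : segmentEnds Z x ⊆ fractionalCells Z x := fun _ hs =>
  mem_fractionalCells.2 (mem_segmentEnds.1 hs).1

theorem mul_card_image_snd_fractionalCells_le (hrow : ∀ r, ∑ c, x c r ∈ Z) :
    2 * #((fractionalCells Z x).image Prod.snd) ≤ #(fractionalCells Z x) := by
  classical
  refine mul_card_image_le_card _ 2 fun r hr => ?_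
  obtain ⟨⟨c, r⟩, hc, rfl⟩ := mem_image.1 hr
  have hc' : ∃ c' ≠ c, x c' r ∉ Z := by
    by_contra! hmem
    have hothers : ∑ c' ∈ univ.erase c, x c' r ∈ Z :=
      sum_mem fun c' hc' => hmem c' (ne_of_mem_erase hc')
    refine mem_fractionalCells.1 hc ((add_mem_cancel_right hothers).1 ?_)
    rw [add_sum_erase _ (fun c => x c r) (mem_univ c)]
    exact hrow r
  obtain ⟨c', hne, hc'⟩ := hc'
  refine one_lt_card.2 ⟨(c, r), ?_, (c', r), ?_, fun h => hne (congrArg Prod.fst h).symm⟩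
  · exact mem_filter.2 ⟨hc, rfl⟩
  · exact mem_filter.2 ⟨mem_fractionalCells.2 hc', rfl⟩

theorem exists_mem_fractionalCells_sdiff_segmentEnds [DecidableEq C] {s : C × Fin n}
    (hs : s ∈ segmentEnds Z x) :
    ∃ s' ∈ fractionalCells Z x \ segmentEnds Z x, s'.1 = s.1 ∧ s'.2 < s.2 ∧
      ∀ r ∈ Ioo s'.2 s.2, x s.1 r ∈ Z := by
  obtain ⟨c, r⟩ := s
  obtain ⟨hr, hend⟩ := mem_segmentEnds.1 hs
  have hstart : prefixSum r (x c) ∉ Z := fun hmem =>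
    hr ((add_mem_cancel_left hmem).1 (prefixSum_succ r (x c) ▸ hend))
  obtain ⟨r', hlt, hr', hbetween, hpre⟩ := exists_lt_notMem_of_prefixSum_notMem hstart
  exact ⟨(c, r'), mem_sdiff.2 ⟨mem_fractionalCells.2 hr', fun h => hpre (mem_segmentEnds.1 h).2⟩,
    rfl, hlt, hbetween⟩

theorem mul_card_segmentEnds_le : 2 * #(segmentEnds Z x) ≤ #(fractionalCells Z x) := by
  classical
  choose! f hf hfst hlt hbetween using
    fun s (hs : s ∈ segmentEnds Z x) => exists_mem_fractionalCells_sdiff_segmentEnds hs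
  have hnot_lt : ∀ s ∈ segmentEnds Z x, ∀ s' ∈ segmentEnds Z x, f s = f s' → ¬ s.2 < s'.2 :=
    fun s hs s' hs' hss hslt => by
      have hcol : s'.1 = s.1 := by rw [← hfst s hs, ← hfst s' hs', hss]
      have hmem := hbetween s' hs' s.2 (mem_Ioo.2 ⟨hss ▸ hlt s hs, hslt⟩)
      exact mem_fractionalCells.1 (segmentEnds_subset hs) (hcol ▸ hmem)
  have hinj : Set.InjOn f (segmentEnds Z x) := fun s hs s' hs' hss =>
    Prod.ext (by rw [← hfst s hs, ← hfst s' hs', hss])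
      (le_antisymm (not_lt.1 (hnot_lt s' hs' s hs hss.symm)) (not_lt.1 (hnot_lt s hs s' hs' hss)))
  have hcard := card_le_card_of_injOn f hf hinj
  rw [card_sdiff_of_subset segmentEnds_subset] at hcard
  have := card_le_card (segmentEnds_subset (Z := Z) (x := x))
  omega

theorem prefixSum_eq_zero_of_mem (hcell : ∀ r, x c r ∈ Z → z c r = 0)
    (hend : ∀ r, (c, r) ∈ segmentEnds Z x → prefixSum (r + 1) (z c) = 0) {t : ℕ} (ht : t ≤ n)
    (hmem : prefixSum t (x c) ∈ Z) : prefixSum t (z c) = 0 := by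
  induction t with
  | zero => exact prefixSum_zero _
  | succ t ih =>
    have hx := prefixSum_succ ⟨t, ht⟩ (x c)
    have hz := prefixSum_succ ⟨t, ht⟩ (z c)
    simp only at hx hz
    by_cases hr : x c ⟨t, ht⟩ ∈ Z
    · rw [hz, hcell _ hr, add_zero]
      exact ih (by omega) ((add_mem_cancel_right hr).1 (hx ▸ hmem))
    · exact hend ⟨t, ht⟩ (mem_segmentEnds.2 ⟨hr, hmem⟩)

variable {K : Type*} [Field K] {Z : AddSubgroup K} {x : C → Fin n → K}

theorem exists_ne_zero_forall_dual_eq_zero {V ι : Type*} [AddCommGroup V] [Module K V]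
    [FiniteDimensional K V] [Fintype ι] (f : ι → Module.Dual K V)
    (hι : Fintype.card ι < Module.finrank K V) : ∃ v ≠ 0, ∀ i, f i v = 0 := by
  rw [← Module.finrank_fintype_fun_eq_card K] at hι
  obtain ⟨v, hv, hv0⟩ := (Submodule.ne_bot_iff _).1
    (LinearMap.ker_ne_bot_of_finrank_lt (f := LinearMap.pi f) hι)
  exact ⟨v, hv0, congrFun hv⟩

theorem exists_ne_zero_forall_prefixSum_eq_zero (hrow : ∀ r, ∑ c, x c r ∈ Z) {r₀ : Fin n}
    (hr₀ : r₀ ∈ (fractionalCells Z x).image Prod.snd) :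
    ∃ z : C → Fin n → K, z ≠ 0 ∧ (∀ c r, x c r ∈ Z → z c r = 0) ∧
      (∀ c r, (c, r) ∈ segmentEnds Z x → prefixSum (r + 1) (z c) = 0) ∧
      ∀ r ≠ r₀, ∑ c, z c r = 0 := by
  classical
  let fractionalRows := (fractionalCells Z x).image Prod.snd
  let f : ↥(fractionalCells Z x)ᶜ ⊕ ↥(segmentEnds Z x) ⊕ ↥(fractionalRows.erase r₀) →
      Module.Dual K (C → Fin n → K) :=
    Sum.elim (fun s => LinearMap.proj s.1.2 ∘ₗ LinearMap.proj s.1.1)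
      (Sum.elim (fun s => prefixSum (s.1.2 + 1) ∘ₗ LinearMap.proj s.1.1)
        fun r => ∑ c, LinearMap.proj r.1 ∘ₗ LinearMap.proj c)
  have hcard : Fintype.card (↥(fractionalCells Z x)ᶜ ⊕ ↥(segmentEnds Z x) ⊕
      ↥(fractionalRows.erase r₀)) < Module.finrank K (C → Fin n → K) := by
    have hrows : 2 * #fractionalRows ≤ _ := mul_card_image_snd_fractionalCells_le hrow
    have hends := mul_card_segmentEnds_le (Z := Z) (x := x)
    have hpos : 0 < #fractionalRows := card_pos.2 ⟨r₀, hr₀⟩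
    have hle := card_le_univ (fractionalCells Z x)
    rw [Fintype.card_prod] at hle
    simp only [Fintype.card_sum, Fintype.card_coe, card_compl, Fintype.card_prod,
      Module.finrank_pi_fintype, Module.finrank_self, sum_const, card_univ, smul_eq_mul, mul_one]
    have : #(fractionalRows.erase r₀) = #fractionalRows - 1 := card_erase_of_mem hr₀
    omega
  obtain ⟨z, hz, hf⟩ := exists_ne_zero_forall_dual_eq_zero f hcard
  have hcell : ∀ c r, x c r ∈ Z → z c r = 0 := fun c r hr =>
    hf (.inl ⟨(c, r), mem_compl.2 fun h => mem_fractionalCells.1 h hr⟩)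
  refine ⟨z, hz, hcell, fun c r hs => hf (.inr (.inl ⟨(c, r), hs⟩)), fun r hr => ?_⟩
  by_cases hmem : r ∈ fractionalRows
  · simpa [f] using hf (.inr (.inr ⟨r, mem_erase.2 ⟨hr, hmem⟩⟩))
  · refine sum_eq_zero fun c _ => hcell c r (by_contra fun hc => hmem ?_)
    exact mem_image.2 ⟨(c, r), mem_fractionalCells.2 hc, rfl⟩

theorem exists_ne_zero_perturbation (hrow : ∀ r, ∑ c, x c r ∈ Z) (hcol : ∀ c, ∑ r, x c r ∈ Z)
    (hx : (fractionalCells Z x).Nonempty) :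
    ∃ z : C → Fin n → K, z ≠ 0 ∧ (∀ c r, x c r ∈ Z → z c r = 0) ∧
      (∀ c, ∀ t ≤ n, prefixSum t (x c) ∈ Z → prefixSum t (z c) = 0) ∧ ∑ c, z c = 0 := by
  obtain ⟨⟨c₀, r₀⟩, hx⟩ := hx
  obtain ⟨z, hz, hcell, hend, hrows⟩ :=
    exists_ne_zero_forall_prefixSum_eq_zero hrow (mem_image_of_mem Prod.snd hx)
  have hpre : ∀ c, ∀ t ≤ n, prefixSum t (x c) ∈ Z → prefixSum t (z c) = 0 := fun c t ht =>
    prefixSum_eq_zero_of_mem (hcell c) (hend c) ht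
  have htotal : ∑ r, ∑ c, z c r = 0 := by
    rw [sum_comm]
    refine sum_eq_zero fun c _ => ?_
    rw [← prefixSum_of_le le_rfl (z c)]
    exact hpre c n le_rfl (by rw [prefixSum_of_le le_rfl]; exact hcol c)
  rw [sum_eq_single r₀ (fun r _ => hrows r) (by simp)] at htotal
  refine ⟨z, hz, hcell, hpre, funext fun r => ?_⟩
  rw [Finset.sum_apply, Pi.zero_apply]
  rcases eq_or_ne r r₀ with rfl | hr
  exacts [htotal, hrows r hr]

end TightCells

section Integrality

open scoped Pointwise Topology

variable {n : ℕ}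

theorem prefixSum_intCast {R : Type*} [CommRing R] (t : ℕ) (v : Fin n → ℤ) :
    prefixSum t (fun r => (v r : R)) = (prefixSum t v : ℤ) := by
  simp [prefixSum_apply]

theorem intCast_mem_galeSet_iff {R : Type*} [CommRing R] [LinearOrder R] [IsStrictOrderedRing R]
    {d v : Fin n → ℤ} :
    (fun r => (v r : R)) ∈ galeSet (fun r => (d r : R)) ↔ v ∈ galeSet d := by
  simp only [galeSet, Set.mem_ofPred_eq, prefixSum_intCast]
  norm_cast

theorem mem_galeSet_iff_forall_le {R : Type*} [CommSemiring R] [PartialOrder R]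
    {d v : Fin n → R} : v ∈ galeSet d ↔ (∀ r, 0 ≤ v r ∧ v r ≤ 1) ∧
      (∀ t ≤ n, prefixSum t d ≤ prefixSum t v) ∧ ∑ r, v r = ∑ r, d r := by
  refine ⟨fun h => ⟨h.1, fun t _ => h.2.1 t, h.2.2⟩, fun h => ⟨h.1, fun t => ?_, h.2.2⟩⟩
  rcases le_total t n with ht | ht
  · exact h.2.1 t ht
  · rw [prefixSum_of_le ht, prefixSum_of_le ht, h.2.2]

theorem continuous_prefixSum (t : ℕ) : Continuous (prefixSum t : (Fin n → ℝ) → ℝ) :=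
  LinearMap.continuous_of_finiteDimensional _

theorem convex_galeSet (d : Fin n → ℝ) : Convex ℝ (galeSet d) := by
  intro u hu v hv a b ha hb hab
  refine ⟨fun r => ?_, fun t => ?_, ?_⟩
  · exact convex_Icc (0 : ℝ) 1 (hu.1 r) (hv.1 r) ha hb hab
  · rw [map_add, map_smul, map_smul]
    exact convex_Ici (prefixSum t d) (hu.2.1 t) (hv.2.1 t) ha hb hab
  · simp only [Pi.add_apply, Pi.smul_apply, sum_add_distrib, ← smul_sum, hu.2.2, hv.2.2]
    rw [← add_smul, hab, one_smul]

theorem isCompact_galeSet (d : Fin n → ℝ) : IsCompact (galeSet d) := by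
  refine (isCompact_Icc (a := (0 : Fin n → ℝ)) (b := 1)).of_isClosed_subset ?_
    fun v hv => ⟨fun r => (hv.1 r).1, fun r => (hv.1 r).2⟩
  simp only [galeSet, Set.ofPred_and, Set.ofPred_forall]
  refine .inter (isClosed_iInter fun r => .inter ?_ ?_) (.inter (isClosed_iInter fun t => ?_) ?_)
  · exact isClosed_le (by fun_prop) (by fun_prop)
  · exact isClosed_le (by fun_prop) (by fun_prop)
  · exact isClosed_le (by fun_prop) (continuous_prefixSum t)
  · exact isClosed_eq (by fun_prop) (by fun_prop)

theorem eq_zero_of_mem_extremePoints {E : Type*} [AddCommGroup E] [Module ℝ E] {A : Set E}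
    {x z : E} (hx : x ∈ A.extremePoints ℝ) (hz : ∀ᶠ ε in 𝓝 (0 : ℝ), x + ε • z ∈ A) : z = 0 := by
  obtain ⟨δ, hδ, hball⟩ := Metric.eventually_nhds_iff.1 hz
  have hpos : x + (δ / 2) • z ∈ A := hball (by rw [dist_zero_right, Real.norm_eq_abs]; grind)
  have hneg : x + (-(δ / 2)) • z ∈ A := hball (by rw [dist_zero_right, Real.norm_eq_abs]; grind)
  have hmid : x ∈ openSegment ℝ (x + (δ / 2) • z) (x + (-(δ / 2)) • z) :=
    ⟨1 / 2, 1 / 2, by norm_num, by norm_num, by norm_num, by module⟩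
  have heq := (mem_extremePoints.1 hx).2 _ hpos _ hneg hmid
  have hsmul : (δ / 2) • z = 0 := by simpa using heq.1
  exact (smul_eq_zero.1 hsmul).resolve_left (by positivity)

theorem eventually_le_add_mul {a b c : ℝ} (hab : a ≤ b) (hc : a = b → c = 0) :
    ∀ᶠ ε in 𝓝 (0 : ℝ), a ≤ b + ε * c := by
  rcases hab.eq_or_lt with heq | hlt
  · simp [hc heq, hab]
  · have hlim : Filter.Tendsto (fun ε : ℝ => b + ε * c) (𝓝 0) (𝓝 b) :=
      Continuous.tendsto' (by fun_prop) _ _ (by simp)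
    exact hlim.eventually_const_le hlt

theorem eventually_add_smul_mem_galeSet {d v z : Fin n → ℝ} (hv : v ∈ galeSet d)
    (hzero : ∀ r, v r = 0 → z r = 0) (hone : ∀ r, v r = 1 → z r = 0)
    (hpre : ∀ t ≤ n, prefixSum t v = prefixSum t d → prefixSum t z = 0) :
    ∀ᶠ ε in 𝓝 (0 : ℝ), v + ε • z ∈ galeSet d := by
  have hnonneg : ∀ᶠ ε in 𝓝 (0 : ℝ), ∀ r, 0 ≤ v r + ε * z r := Filter.eventually_all.2 fun r =>
    eventually_le_add_mul (hv.1 r).1 fun h => hzero r h.symm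
  have hle_one : ∀ᶠ ε in 𝓝 (0 : ℝ), ∀ r, -1 ≤ -v r + ε * -z r := Filter.eventually_all.2 fun r =>
    eventually_le_add_mul (neg_le_neg (hv.1 r).2) fun h => by
      rw [hone r (neg_injective h.symm), neg_zero]
  have hprefix : ∀ᶠ ε in 𝓝 (0 : ℝ), ∀ t ∈ Set.Iic n,
      prefixSum t d ≤ prefixSum t v + ε * prefixSum t z :=
    (Filter.eventually_all_finite (Set.finite_Iic n)).2 fun t ht =>
      eventually_le_add_mul (hv.2.1 t) fun h => hpre t ht h.symm
  have hsum : ∑ r, z r = 0 := by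
    rw [← prefixSum_of_le le_rfl z]
    exact hpre n le_rfl (by rw [prefixSum_of_le le_rfl, prefixSum_of_le le_rfl, hv.2.2])
  filter_upwards [hnonneg, hle_one, hprefix] with ε h0 h1 hp
  refine mem_galeSet_iff_forall_le.2 ⟨fun r => ⟨h0 r, ?_⟩, fun t ht => ?_, ?_⟩
  · have := h1 r
    simp only [Pi.add_apply, Pi.smul_apply, smul_eq_mul]
    linarith
  · rw [map_add, map_smul]
    exact hp t ht
  · simp [sum_add_distrib, ← mul_sum, hsum, hv.2.2]

theorem forall_mem_of_mem_extremePoints {C : Type*} [Fintype C] {d : C → Fin n → ℤ}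
    {p : Fin n → ℤ} {x : C → Fin n → ℝ}
    (hx : x ∈ Set.extremePoints ℝ {x : C → Fin n → ℝ |
      (∀ c, x c ∈ galeSet fun r => (d c r : ℝ)) ∧ ∑ c, x c = fun r => (p r : ℝ)}) (c : C)
    (r : Fin n) : x c r ∈ (Int.castAddHom ℝ).range := by
  by_contra hcr
  obtain ⟨hmem, hsum⟩ := hx.1
  have hrow : ∀ r, ∑ c, x c r ∈ (Int.castAddHom ℝ).range := fun r =>
    ⟨p r, by rw [← Finset.sum_apply, hsum]; rfl⟩
  have hcol : ∀ c, ∑ r, x c r ∈ (Int.castAddHom ℝ).range := fun c =>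
    ⟨∑ r, d c r, by rw [(hmem c).2.2]; simp⟩
  obtain ⟨z, hz, hcell, hpre, hzsum⟩ :=
    exists_ne_zero_perturbation hrow hcol ⟨(c, r), mem_fractionalCells.2 hcr⟩
  refine hz (eq_zero_of_mem_extremePoints hx ?_)
  have hgale : ∀ᶠ ε in 𝓝 (0 : ℝ), ∀ c, (x + ε • z) c ∈ galeSet fun r => (d c r : ℝ) :=
    Filter.eventually_all.2 fun c => eventually_add_smul_mem_galeSet (hmem c)
      (fun r hr => hcell c r ⟨0, by simp [hr]⟩) (fun r hr => hcell c r ⟨1, by simp [hr]⟩)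
      fun t ht h => hpre c t ht ⟨prefixSum t (d c), by rw [h, prefixSum_intCast]; rfl⟩
  filter_upwards [hgale] with ε hε
  refine ⟨hε, ?_⟩
  simp only [Pi.add_apply, Pi.smul_apply, sum_add_distrib, ← smul_sum, hzsum, hsum, smul_zero,
    add_zero]

theorem mem_sum_galeSet_of_intCast_mem {C : Type*} [Fintype C] {d : C → Fin n → ℤ}
    {p : Fin n → ℤ} (hp : (fun r => (p r : ℝ)) ∈ ∑ c, galeSet fun r => (d c r : ℝ)) :
    p ∈ ∑ c, galeSet (d c) := by
  simp only [Set.mem_fintype_sum, exists_prop] at hp ⊢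
  have hcompact : IsCompact {x : C → Fin n → ℝ |
      (∀ c, x c ∈ galeSet fun r => (d c r : ℝ)) ∧ ∑ c, x c = fun r => (p r : ℝ)} := by
    have hpi := isCompact_univ_pi fun c => isCompact_galeSet fun r => (d c r : ℝ)
    have hclosed : IsClosed {x : C → Fin n → ℝ | ∑ c, x c = fun r => (p r : ℝ)} :=
      isClosed_eq (by fun_prop) (by fun_prop)
    convert hpi.inter_right hclosed using 1
    ext x
    simp
  obtain ⟨x, hx⟩ := hcompact.extremePoints_nonempty hp
  choose y hy using forall_mem_of_mem_extremePoints hx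
  have hxy : ∀ c, x c = fun r => (y c r : ℝ) := fun c => funext fun r => (hy c r).symm
  obtain ⟨hmem, hsum⟩ := hx.1
  refine ⟨y, fun c => intCast_mem_galeSet_iff.1 (hxy c ▸ hmem c), ?_⟩
  ext r
  have hr := congrFun hsum r
  simp only [hxy, Finset.sum_apply] at hr ⊢
  exact_mod_cast hr

theorem exists_natCast_eq_of_mem_sum_galeSet {C : Type*} [Fintype C] {d : C → Fin n → ℤ}
    {p : Fin n → ℤ} (hp : p ∈ ∑ c, galeSet (d c)) :
    ∃ e : Fin n →₀ ℕ, p = fun r => (e r : ℤ) := by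
  obtain ⟨y, hy, rfl⟩ := (Set.mem_fintype_sum _ _).1 hp
  refine ⟨Finsupp.equivFunOnFinite.symm fun r => (∑ c, y c r).toNat, funext fun r => ?_⟩
  rw [Finset.sum_apply]
  exact (Int.toNat_of_nonneg (sum_nonneg fun c _ => ((hy c).1 r).1)).symm

theorem IsSchubertFamily.newtonPolytope_subset {S : Perm (Fin n) → MvPolynomial (Fin n) ℤ}
    (hS : IsSchubertFamily S) (w : Perm (Fin n)) :
    newtonPolytope (S w) ⊆ ∑ c, galeSet fun r => (rotheColumn w c r : ℝ) := by
  refine convexHull_min ?_ (convex_sum _ fun c _ => convex_galeSet _)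
  rintro _ ⟨d, hd, rfl⟩
  obtain ⟨x, hx, hsum⟩ := (Set.mem_fintype_sum _ _).1
    ((hS.coeff_ne_zero_iff w d).1 (mem_support_iff.1 hd))
  refine (Set.mem_fintype_sum _ _).2
    ⟨fun c r => (x c r : ℝ), fun c => intCast_mem_galeSet_iff.2 (hx c), funext fun r => ?_⟩
  have hr := congrFun hsum r
  simp only [Finset.sum_apply] at hr ⊢
  exact_mod_cast hr

end Integrality

end Schubert

/-- Every Schubert polynomial has saturated Newton polytope: every lattice point of
`Newton(𝔖_w)` is the exponent vector of a monomial with nonzero coefficient in `𝔖_w`. -/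
theorem stmt8 (n : ℕ) (Schub : Equiv.Perm (Fin n) → MvPolynomial (Fin n) ℤ)
    -- `𝔖_{w₀} = x_1^{n-1} x_2^{n-2} ⋯ x_{n-1}` for the longest permutation `w₀`.
    (hbase : Schub Fin.revPerm = ∏ i : Fin n, X i ^ (n - 1 - (i : ℕ)))
    -- For adjacent positions `i, j = i+1` with `w(i) < w(j)`: `𝔖_w = ∂_i 𝔖_{w sᵢ}`, i.e.
    -- `(xᵢ - xⱼ) ⬝ 𝔖_w = 𝔖_{w sᵢ} - sᵢ ⬝ 𝔖_{w sᵢ}`.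
    (hrec : ∀ (w : Equiv.Perm (Fin n)) (i j : Fin n), (i : ℕ) + 1 = (j : ℕ) → w i < w j →
      (X i - X j) * Schub w =
        Schub (w * Equiv.swap i j) -
          rename (Equiv.swap i j) (Schub (w * Equiv.swap i j)))
    (w : Equiv.Perm (Fin n)) :
    ∀ p : Fin n → ℝ, p ∈ newtonPolytope (Schub w) → (∀ i, ∃ m : ℤ, p i = (m : ℝ)) →
      ∃ d ∈ (Schub w).support, p = fun i => ((d i : ℕ) : ℝ) := by
  intro p hp hint
  have hS : Schubert.IsSchubertFamily Schub := ⟨hbase, fun w k l hkl hw =>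
    hrec w k l (Nat.covBy_iff_add_one_eq.1 (Fin.covBy_iff.1 hkl)) hw⟩
  choose m hm using hint
  obtain rfl : p = fun i => (m i : ℝ) := funext hm
  have hmem := Schubert.mem_sum_galeSet_of_intCast_mem (hS.newtonPolytope_subset w hp)
  obtain ⟨d, rfl⟩ := Schubert.exists_natCast_eq_of_mem_sum_galeSet hmem
  exact ⟨d, mem_support_iff.2 ((hS.coeff_ne_zero_iff w d).2 hmem), by simp⟩
end
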